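/- arXiv:1502.01288 — 2 statements merged into one kernel-verified Lean document; each statement's English description precedes it below -/
import Mathlib

section
/- Let ℓ be an odd prime and let G be a subgroup of GL₂(F_ℓ) such that every element of G lies in a conjugate of N_sp, some element of G is not diagonalizable over F_ℓ, and the determinant map G → F_ℓˣ is surjective. Then either G is contained in a conjugate of N_sp, or the image H of G in PGL₂(F_ℓ) is isomorphic to S₄ and ℓ ≡ 13 (mod 24). -/
open Matrix

abbrev GL2 (ℓ : ℕ) : Type := GL (Fin 2) (ZMod ℓ)

/-- The underlying matrix of an element of `GL₂(F_ℓ)`. -/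
def mat {ℓ : ℕ} (g : GL2 ℓ) : Matrix (Fin 2) (Fin 2) (ZMod ℓ) := g

/-- `g` is a diagonal matrix. -/
def IsDiag {ℓ : ℕ} (g : GL2 ℓ) : Prop := mat g 0 1 = 0 ∧ mat g 1 0 = 0

/-- `g` is an antidiagonal matrix. -/
def IsAnti {ℓ : ℕ} (g : GL2 ℓ) : Prop := mat g 0 0 = 0 ∧ mat g 1 1 = 0

/-- `g` is a scalar matrix. -/
def IsScalar {ℓ : ℕ} (g : GL2 ℓ) : Prop :=
  ∃ c : ZMod ℓ, mat g = c • (1 : Matrix (Fin 2) (Fin 2) (ZMod ℓ))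

/-- Membership in the split Cartan subgroup `C_sp` (the diagonal matrices). -/
def InCsp {ℓ : ℕ} (g : GL2 ℓ) : Prop := IsDiag g

/-- Membership in the normalizer `N_sp` of the split Cartan (diagonal or antidiagonal). -/
def InNsp {ℓ : ℕ} (g : GL2 ℓ) : Prop := IsDiag g ∨ IsAnti g

/-- Membership in the nonsplit Cartan `C_ns` w.r.t. the nonresidue `δ`:
matrices of the form `[[a, δb], [b, a]]`. -/
def InCns {ℓ : ℕ} (δ : ZMod ℓ) (g : GL2 ℓ) : Prop :=
  mat g 1 1 = mat g 0 0 ∧ mat g 0 1 = δ * mat g 1 0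

/-- Membership in `N_ns \ C_ns` (as a matrix shape): `[[a, -δb], [b, -a]]`. -/
def InNnsAnti {ℓ : ℕ} (δ : ZMod ℓ) (g : GL2 ℓ) : Prop :=
  mat g 1 1 = - mat g 0 0 ∧ mat g 0 1 = - (δ * mat g 1 0)

/-- Membership in the normalizer `N_ns` of the nonsplit Cartan. -/
def InNns {ℓ : ℕ} (δ : ZMod ℓ) (g : GL2 ℓ) : Prop := InCns δ g ∨ InNnsAnti δ g

/-- `PGL₂(F_ℓ)`: the quotient of `GL₂(F_ℓ)` by its center (the scalar matrices). -/
abbrev PGL2 (ℓ : ℕ) : Type := GL2 ℓ ⧸ Subgroup.center (GL2 ℓ)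

/-- The natural projection `GL₂(F_ℓ) →* PGL₂(F_ℓ)`. -/
def toPGL (ℓ : ℕ) : GL2 ℓ →* PGL2 ℓ := QuotientGroup.mk' _

/-- The image of a subgroup of `GL₂(F_ℓ)` in `PGL₂(F_ℓ)`. -/
def projImage {ℓ : ℕ} (G : Subgroup (GL2 ℓ)) : Subgroup (PGL2 ℓ) := G.map (toPGL ℓ)

/-- `H` is isomorphic to the alternating group `A₄`. -/
def IsA4 {ℓ : ℕ} (H : Subgroup (PGL2 ℓ)) : Prop := Nonempty (H ≃* alternatingGroup (Fin 4))

/-- `H` is isomorphic to the symmetric group `S₄`. -/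
def IsS4 {ℓ : ℕ} (H : Subgroup (PGL2 ℓ)) : Prop := Nonempty (H ≃* Equiv.Perm (Fin 4))

/-- `H` is isomorphic to the alternating group `A₅`. -/
def IsA5 {ℓ : ℕ} (H : Subgroup (PGL2 ℓ)) : Prop := Nonempty (H ≃* alternatingGroup (Fin 5))

/-!
Over the quadratic extension `K` of a finite field `F`, each nonscalar `g` in `G` has exactly two
fixed points on `P¹(K)`. Counting fixed points as for finite rotation groups, the projective image
`H` of `G` has two or three short orbits on `P¹(K)`. Two short orbits are two fixed points; three
have stabilizer orders with `1/e₁ + 1/e₂ + 1/e₃ = 1 + 2/|H|`. The quadratic character of the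
determinant is nontrivial on `H`, and the same count on its kernel shows that two of the `eᵢ` are
even, which excludes `A₄` and `A₅`: either `H` preserves a pair of points, or `|H| = 24`. A group of
order `24` with a normal subgroup of order `2` or `3` preserves the pair fixed by that subgroup, and
otherwise it is `S₄`, acting on its Sylow `3`-subgroups.

If `H` preserves a pair in `P¹(K)` and some element of `H` has two rational fixed points, then `H`
preserves a pair in `P¹(F)`: the given one if such an element fixes it pointwise, and otherwise the
fixed points of such an element, which swaps the given pair and is central in `H`. If there is no
such element, all elements of `G` with square determinant are scalar. If `H` is `S₄`, its `3`-cycles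
and `4`-cycles come from diagonalizable matrices and so provide primitive third and fourth roots of
unity in `F`.
-/

section FixesTwoPoints

open MulAction
open scoped Pointwise

/-- Every nontrivial element of `H` has exactly two fixed points in `X`, as happens for a group of
semisimple Möbius transformations of a projective line. -/
def FixesTwoPoints (H X : Type*) [Group H] [MulAction H X] : Prop :=
  ∀ h : H, h ≠ 1 → (fixedBy X h).ncard = 2

variable {H X : Type*} [Group H] [MulAction H X]

lemma FixesTwoPoints.subgroup (hfix : FixesTwoPoints H X) (K : Subgroup H) :
    FixesTwoPoints K X :=
  fun k hk ↦ hfix k (by simpa using hk)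

lemma FixesTwoPoints.sum_card_stabilizer_sub_one [Finite H] [Fintype X]
    (hfix : FixesTwoPoints H X) :
    ∑ x : X, ((Nat.card (stabilizer H x) : ℤ) - 1) = 2 * (Nat.card H - 1) := by
  classical
  have := Fintype.ofFinite H
  have hcount : ∑ x : X, Nat.card (stabilizer H x) = ∑ h : H, (fixedBy X h).ncard := by
    simpa [Finset.bipartiteAbove, Finset.bipartiteBelow, Nat.card_eq_fintype_card,
      Fintype.card_subtype, Set.ncard_eq_toFinset_card'] using
      Finset.sum_card_bipartiteAbove_eq_sum_card_bipartiteBelow (s := Finset.univ)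
        (t := Finset.univ) fun (x : X) (h : H) ↦ h • x = x
  have herase : ∑ h ∈ Finset.univ.erase (1 : H), (fixedBy X h).ncard = 2 * (Nat.card H - 1) := by
    rw [Finset.sum_congr rfl fun h hh ↦ hfix h (Finset.ne_of_mem_erase hh)]
    simp [mul_comm]
  rw [← Finset.add_sum_erase _ _ (Finset.mem_univ (1 : H)), herase, fixedBy_one_eq_univ,
    Set.ncard_univ] at hcount
  rw [Finset.sum_sub_distrib, ← Nat.cast_sum, hcount]
  push_cast [Nat.card_pos (α := H)]
  simp

lemma ncard_orbit_mul_card_stabilizer (x : X) :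
    (orbit H x).ncard * Nat.card (stabilizer H x) = Nat.card H := by
  rw [← index_stabilizer, Subgroup.index_mul_card]

lemma sum_orbit_card_stabilizer_sub_one (x : X) [Fintype (orbit H x)] :
    ∑ y ∈ (orbit H x).toFinset, ((Nat.card (stabilizer H y) : ℤ) - 1) =
      Nat.card H - (orbit H x).ncard := by
  have hconst : ∀ y ∈ (orbit H x).toFinset,
      (Nat.card (stabilizer H y) : ℤ) - 1 = Nat.card (stabilizer H x) - 1 := by
    intro y hy
    have hy := Nat.card_congr (stabilizerEquivStabilizerOfOrbitRel (Set.mem_toFinset.1 hy)).toEquiv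
    rw [hy]
  rw [Finset.sum_congr rfl hconst, Finset.sum_const, ← Set.ncard_eq_toFinset_card',
    nsmul_eq_mul, mul_sub_one, ← Nat.cast_mul, ncard_orbit_mul_card_stabilizer]

lemma FixesTwoPoints.sum_card_sub_ncard_orbit [Finite H] [Finite X]
    [Fintype (orbitRel.Quotient H X)] (hfix : FixesTwoPoints H X) :
    ∑ ω : orbitRel.Quotient H X, ((Nat.card H : ℤ) - ω.orbit.ncard) = 2 * (Nat.card H - 1) := by
  classical
  have := Fintype.ofFinite X
  rw [← hfix.sum_card_stabilizer_sub_one,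
    ← Finset.sum_fiberwise Finset.univ (Quotient.mk (orbitRel H X))]
  refine Finset.sum_congr rfl fun ω _ ↦ ?_
  induction ω using Quotient.inductionOn with
  | h x =>
    rw [orbitRel.Quotient.orbit_mk, ← sum_orbit_card_stabilizer_sub_one]
    refine Finset.sum_congr ?_ fun _ _ ↦ rfl
    ext y
    simpa using orbitRel.Quotient.mem_orbit (G := H) (a := y) (x := Quotient.mk'' x)

lemma two_mul_ncard_orbit_le {x : X} (hx : (orbit H x).ncard < Nat.card H) :
    2 * (orbit H x).ncard ≤ Nat.card H := by
  have hmul := ncard_orbit_mul_card_stabilizer (H := H) x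
  have hstab : 2 ≤ Nat.card (stabilizer H x) := by
    by_contra! hlt
    nlinarith
  nlinarith

lemma ncard_orbit_le [Finite H] (x : X) : (orbit H x).ncard ≤ Nat.card H :=
  Nat.le_of_dvd Nat.card_pos (Dvd.intro _ (ncard_orbit_mul_card_stabilizer x))

lemma FixesTwoPoints.exists_finset_short_orbits [Finite H] [Nontrivial H] [Finite X]
    (hfix : FixesTwoPoints H X) :
    ∃ S : Finset (orbitRel.Quotient H X), (S.card = 2 ∨ S.card = 3) ∧
      (∀ ω ∈ S, ω.orbit.ncard < Nat.card H) ∧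
      ∑ ω ∈ S, ((Nat.card H : ℤ) - ω.orbit.ncard) = 2 * (Nat.card H - 1) := by
  classical
  have := Fintype.ofFinite (orbitRel.Quotient H X)
  let S := Finset.univ.filter fun ω : orbitRel.Quotient H X ↦ ω.orbit.ncard < Nat.card H
  have hmem {ω : orbitRel.Quotient H X} : ω ∈ S ↔ ω.orbit.ncard < Nat.card H := by simp [S]
  have hsum : ∑ ω ∈ S, ((Nat.card H : ℤ) - ω.orbit.ncard) = 2 * (Nat.card H - 1) := by
    rw [← hfix.sum_card_sub_ncard_orbit]
    refine Finset.sum_subset (Finset.subset_univ S) fun ω _ hω ↦ ?_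
    rw [hmem, not_lt, ω.orbit_eq_orbit_out Quotient.out_eq'] at hω
    rw [ω.orbit_eq_orbit_out Quotient.out_eq', (ncard_orbit_le _).antisymm hω, sub_self]
  refine ⟨S, ?_, fun ω ↦ hmem.1, hsum⟩
  have hlower : S.card • (Nat.card H : ℤ) ≤ 2 * ∑ ω ∈ S, ((Nat.card H : ℤ) - ω.orbit.ncard) := by
    rw [Finset.mul_sum]
    refine Finset.card_nsmul_le_sum _ _ _ fun ω hω ↦ ?_
    rw [hmem, ω.orbit_eq_orbit_out Quotient.out_eq'] at hω
    rw [ω.orbit_eq_orbit_out Quotient.out_eq']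
    have := two_mul_ncard_orbit_le hω
    lia
  have hupper : ∑ ω ∈ S, ((Nat.card H : ℤ) - ω.orbit.ncard) ≤ S.card • ((Nat.card H : ℤ) - 1) := by
    refine Finset.sum_le_card_nsmul _ _ _ fun ω _ ↦ ?_
    have : 0 < ω.orbit.ncard := (Set.ncard_pos).2 (orbitRel.Quotient.nonempty_orbit ω)
    lia
  rw [hsum] at hlower hupper
  have hone : (1 : ℤ) < Nat.card H := mod_cast Finite.one_lt_card
  rw [nsmul_eq_mul] at hlower hupper
  have hlt : (S.card : ℤ) < 4 := by nlinarith
  have hle : (2 : ℤ) ≤ S.card := by nlinarith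
  lia

lemma FixesTwoPoints.exists_isFixedBlock_or_three_orbits [Finite H] [Nontrivial H] [Finite X]
    (hfix : FixesTwoPoints H X) :
    (∃ s : Set X, s.ncard = 2 ∧ IsFixedBlock H s) ∨
    ∃ x : Fin 3 → X, (Pairwise fun i j ↦ orbit H (x i) ≠ orbit H (x j)) ∧
      (∀ i, (orbit H (x i)).ncard < Nat.card H) ∧
      ∑ i, (orbit H (x i)).ncard = Nat.card H + 2 := by
  classical
  obtain ⟨S, hcard | hcard, hlt, hsum⟩ := hfix.exists_finset_short_orbits
  · obtain ⟨ω₁, ω₂, hne, rfl⟩ := Finset.card_eq_two.1 hcard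
    rw [Finset.sum_pair hne] at hsum
    have h₁ : 0 < ω₁.orbit.ncard := (Set.ncard_pos).2 (orbitRel.Quotient.nonempty_orbit ω₁)
    have h₂ : 0 < ω₂.orbit.ncard := (Set.ncard_pos).2 (orbitRel.Quotient.nonempty_orbit ω₂)
    rw [ω₁.orbit_eq_orbit_out Quotient.out_eq'] at hsum h₁
    rw [ω₂.orbit_eq_orbit_out Quotient.out_eq'] at hsum h₂
    refine .inl ⟨orbit H ω₁.out ∪ orbit H ω₂.out, ?_, fun h ↦ ?_⟩
    · have hdisj := (orbit.eq_or_disjoint (G := H) ω₁.out ω₂.out).resolve_left fun heq ↦ hne <| by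
        rw [← orbitRel.Quotient.orbit_inj, ω₁.orbit_eq_orbit_out Quotient.out_eq',
          ω₂.orbit_eq_orbit_out Quotient.out_eq', heq]
      rw [Set.ncard_union_eq hdisj]
      lia
    · rw [Set.smul_set_union, smul_orbit, smul_orbit]
  · let e := Finset.equivFinOfCardEq hcard
    have hout (i : Fin 3) : orbit H (e.symm i).1.out = (e.symm i).1.orbit :=
      ((e.symm i).1.orbit_eq_orbit_out Quotient.out_eq').symm
    refine .inr ⟨fun i ↦ (e.symm i).1.out, fun i j hij heq ↦ ?_, fun i ↦ ?_, ?_⟩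
    · rw [hout, hout] at heq
      exact hij (e.symm.injective (Subtype.ext (orbitRel.Quotient.orbit_injective heq)))
    · rw [hout]
      exact hlt _ (e.symm i).2
    · have hsum' : ∑ i, (Nat.card H - ((e.symm i).1.orbit.ncard : ℤ)) = 2 * (Nat.card H - 1) := by
        rw [← hsum, ← S.sum_coe_sort]
        exact e.symm.sum_comp fun ω ↦ (Nat.card H : ℤ) - ω.1.orbit.ncard
      simp only [hout]
      rw [Fin.sum_univ_three] at hsum' ⊢
      lia

lemma stabilizer_le_ker_of_odd_card (χ : H →* ℤˣ) {x : X} (hodd : Odd (Nat.card (stabilizer H x))) :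
    stabilizer H x ≤ χ.ker := by
  intro h hh
  have hpow : h ^ Nat.card (stabilizer H x) = 1 := by
    simpa using congrArg Subtype.val (pow_card_eq_one' (x := (⟨h, hh⟩ : stabilizer H x)))
  have hχ : χ h ^ Nat.card (stabilizer H x) = 1 := by rw [← map_pow, hpow, map_one]
  rcases Int.units_eq_one_or (χ h) with h1 | h1
  · exact h1
  · rw [h1, hodd.neg_one_pow] at hχ
    exact absurd hχ (by decide)

lemma card_stabilizer_subgroup {K : Subgroup H} {x : X} (hle : stabilizer H x ≤ K) :
    Nat.card (stabilizer K x) = Nat.card (stabilizer H x) := by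
  rw [show stabilizer K x = (stabilizer H x).subgroupOf K from rfl]
  exact Nat.card_congr (Subgroup.subgroupOfEquivOfLe hle).toEquiv

lemma FixesTwoPoints.card_add_two_le_ncard_orbit_add_ncard_orbit [Finite H] [Finite X]
    (hfix : FixesTwoPoints H X) {χ : H →* ℤˣ} (hχ : Function.Surjective χ) {x y : X}
    (hxy : orbit H x ≠ orbit H y) (hx : Odd (Nat.card (stabilizer H x)))
    (hy : Odd (Nat.card (stabilizer H y))) :
    Nat.card H + 2 ≤ (orbit H x).ncard + (orbit H y).ncard := by
  classical
  have := Fintype.ofFinite X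
  have hker : 2 * Nat.card χ.ker = Nat.card H := by
    rw [← χ.ker.index_mul_card, Subgroup.index_ker, MonoidHom.range_eq_top.2 hχ]
    simp
  have hcongr {z : X} (hz : Odd (Nat.card (stabilizer H z))) :
      ∀ w ∈ (orbit H z).toFinset, (Nat.card (stabilizer χ.ker w) : ℤ) - 1 =
        Nat.card (stabilizer H w) - 1 := by
    intro w hw
    rw [card_stabilizer_subgroup (stabilizer_le_ker_of_odd_card χ _)]
    rwa [Nat.card_congr
      (stabilizerEquivStabilizerOfOrbitRel (Set.mem_toFinset.1 hw)).toEquiv]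
  have hdisj : Disjoint (orbit H x).toFinset (orbit H y).toFinset :=
    Set.disjoint_toFinset.2 ((orbit.eq_or_disjoint x y).resolve_left hxy)
  have hle : ∑ z ∈ (orbit H x).toFinset ∪ (orbit H y).toFinset,
      ((Nat.card (stabilizer χ.ker z) : ℤ) - 1) ≤ 2 * (Nat.card χ.ker - 1) := by
    rw [← (hfix.subgroup χ.ker).sum_card_stabilizer_sub_one]
    refine Finset.sum_le_sum_of_subset_of_nonneg (Finset.subset_univ _) fun z _ _ ↦ ?_
    have : 0 < Nat.card (stabilizer χ.ker z) := Nat.card_pos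
    lia
  rw [Finset.sum_union hdisj, Finset.sum_congr rfl (hcongr hx), Finset.sum_congr rfl (hcongr hy),
    sum_orbit_card_stabilizer_sub_one, sum_orbit_card_stabilizer_sub_one] at hle
  lia

/-- The equation is `1/e₁ + 1/e₂ + 1/e₃ = 1 + 2/n`, whose solutions with two even `eᵢ` are, up to
order, `(2, 2, n/2)` and `(2, 3, 4)`. -/
lemma eq_two_or_eq_twentyFour_of_add_eq {n o₁ o₂ o₃ e₁ e₂ e₃ : ℕ} (h₁ : o₁ * e₁ = n)
    (h₂ : o₂ * e₂ = n) (h₃ : o₃ * e₃ = n) (hsum : o₁ + o₂ + o₃ = n + 2) (he₁ : Even e₁)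
    (he₂ : Even e₂) (ho₁ : o₁ < n) (ho₂ : o₂ < n) (ho₃ : o₃ < n) :
    o₁ = 2 ∨ o₂ = 2 ∨ o₃ = 2 ∨ n = 24 := by
  have hmul {o e : ℕ} (h : o * e = n) (m : ℕ) (hm : m ≤ e) : m * o ≤ n := by nlinarith
  have htwo {o e : ℕ} (h : o * e = n) (ho : o < n) : 2 ≤ e := by
    by_contra! he
    nlinarith
  have := htwo h₁ ho₁
  have := htwo h₂ ho₂
  have := htwo h₃ ho₃
  obtain ⟨k₁, rfl⟩ := he₁
  obtain ⟨k₂, rfl⟩ := he₂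
  have hcases₁ : k₁ = 1 ∨ k₁ = 2 ∨ 3 ≤ k₁ := by lia
  have hcases₂ : k₂ = 1 ∨ k₂ = 2 ∨ 3 ≤ k₂ := by lia
  have hcases₃ : e₃ = 2 ∨ e₃ = 3 ∨ 4 ≤ e₃ := by lia
  have hm₁ := hmul h₁ 6
  have hm₂ := hmul h₂ 6
  have hm₃ := hmul h₃ 4
  rcases hcases₁ with rfl | rfl | hk₁ <;> rcases hcases₂ with rfl | rfl | hk₂ <;>
    rcases hcases₃ with rfl | rfl | he₃ <;> lia

lemma FixesTwoPoints.exists_isFixedBlock_or_card_eq_twentyFour [Finite H] [Finite X]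
    (hfix : FixesTwoPoints H X) {χ : H →* ℤˣ} (hχ : Function.Surjective χ) :
    (∃ s : Set X, s.ncard = 2 ∧ IsFixedBlock H s) ∨ Nat.card H = 24 := by
  have : Nontrivial ℤˣ := ⟨1, -1, by decide⟩
  have : Nontrivial H := hχ.nontrivial
  obtain hs | ⟨x, hne, hlt, hsum⟩ := hfix.exists_isFixedBlock_or_three_orbits
  · exact .inl hs
  have hmul (i : Fin 3) := ncard_orbit_mul_card_stabilizer (H := H) (x i)
  have hpos (i : Fin 3) : 0 < (orbit H (x i)).ncard := by
    by_contra! h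
    have := hmul i
    have := hlt i
    nlinarith
  rw [Fin.sum_univ_three] at hsum
  have hodd {i j : Fin 3} (hij : i ≠ j) (hi : Odd (Nat.card (stabilizer H (x i))))
      (hj : Odd (Nat.card (stabilizer H (x j)))) : False := by
    have hle := hfix.card_add_two_le_ncard_orbit_add_ncard_orbit hχ (hne hij) hi hj
    have hpos₀ := hpos 0
    have hpos₁ := hpos 1
    have hpos₂ := hpos 2
    fin_cases i <;> fin_cases j <;> simp at hij hle <;> lia
  have htwo {i j k : Fin 3} (hsum : (orbit H (x i)).ncard + (orbit H (x j)).ncard +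
      (orbit H (x k)).ncard = Nat.card H + 2) (hi : Even (Nat.card (stabilizer H (x i))))
      (hj : Even (Nat.card (stabilizer H (x j)))) :
      (∃ i, (orbit H (x i)).ncard = 2) ∨ Nat.card H = 24 := by
    obtain h | h | h | h := eq_two_or_eq_twentyFour_of_add_eq (hmul i) (hmul j) (hmul k) hsum hi hj
      (hlt i) (hlt j) (hlt k)
    exacts [.inl ⟨i, h⟩, .inl ⟨j, h⟩, .inl ⟨k, h⟩, .inr h]
  suffices h : (∃ i, (orbit H (x i)).ncard = 2) ∨ Nat.card H = 24 from
    h.imp_left fun ⟨i, hi⟩ ↦ ⟨_, hi, .orbit (x i)⟩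
  rcases Nat.even_or_odd (Nat.card (stabilizer H (x 0))) with h₀ | h₀
  · rcases Nat.even_or_odd (Nat.card (stabilizer H (x 1))) with h₁ | h₁
    · exact htwo hsum h₀ h₁
    · refine htwo (i := 0) (j := 2) (k := 1) (by lia) h₀ ?_
      exact (Nat.even_or_odd _).resolve_right fun h₂ ↦ hodd (by decide) h₁ h₂
  · refine htwo (i := 1) (j := 2) (k := 0) (by lia) ?_ ?_
    · exact (Nat.even_or_odd _).resolve_right fun h₁ ↦ hodd (by decide) h₀ h₁
    · exact (Nat.even_or_odd _).resolve_right fun h₂ ↦ hodd (by decide) h₀ h₂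

lemma FixesTwoPoints.exists_isFixedBlock_of_normal_of_prime_card (hfix : FixesTwoPoints H X)
    (M : Subgroup H) [M.Normal] (hM : (Nat.card M).Prime) :
    ∃ s : Set X, s.ncard = 2 ∧ IsFixedBlock H s := by
  have := Fact.mk hM
  have : Nontrivial M := by
    have := Nat.finite_of_card_ne_zero hM.ne_zero
    exact Finite.one_lt_card_iff_nontrivial.1 hM.one_lt
  obtain ⟨m, hm⟩ := exists_ne (1 : M)
  have hgen : Subgroup.zpowers m = ⊤ := zpowers_eq_top_of_prime_card rfl hm
  have hfixed : fixedPoints M X = fixedBy X (m : H) := by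
    ext x
    refine ⟨fun hx ↦ hx m, fun hx ↦ ?_⟩
    have hle : Subgroup.zpowers m ≤ stabilizer M x := Subgroup.zpowers_le.2 hx
    exact fun m' ↦ hle (hgen ▸ Subgroup.mem_top m')
  refine ⟨fixedPoints M X, by rw [hfixed, hfix m (by simpa using hm)], ?_⟩
  exact isInvariantBlock_iff_isFixedBlock.1 fun h ↦ Set.smul_set_subset_iff.2 fun x hx ↦
    smul_mem_fixedPoints_of_normal h hx

end FixesTwoPoints

section CardTwentyFour

variable {H : Type*} [Group H]

lemma card_sylow_three_of_card_eq (hH : Nat.card H = 24) (Q : Sylow 3 H) :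
    Nat.card (Q : Subgroup H) = 3 := by
  have := Nat.finite_of_card_ne_zero (hH ▸ by decide : Nat.card H ≠ 0)
  have := Fact.mk Nat.prime_three
  have hpow : Nat.card Q = 3 ^ Nat.factorization 24 3 := hH ▸ Q.card_eq_multiplicity
  have hfac : Nat.factorization 24 3 = 1 := by
    rw [← Nat.multiplicity_eq_factorization Nat.prime_three (by decide)]
    exact multiplicity_eq_of_dvd_of_not_dvd (by decide) (by decide)
  rw [hpow, hfac, pow_one]

lemma card_sylow_three_eq_one_or_four (hH : Nat.card H = 24) :
    Nat.card (Sylow 3 H) = 1 ∨ Nat.card (Sylow 3 H) = 4 := by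
  have := Nat.finite_of_card_ne_zero (hH ▸ by decide : Nat.card H ≠ 0)
  have := Fact.mk Nat.prime_three
  obtain ⟨Q⟩ : Nonempty (Sylow 3 H) := inferInstance
  have hidx : (Q : Subgroup H).index = 8 := by
    have hmul := (Q : Subgroup H).index_mul_card
    rw [card_sylow_three_of_card_eq hH, hH] at hmul
    lia
  have hdvd : Nat.card (Sylow 3 H) ∣ 8 := hidx ▸ Q.card_dvd_index
  have hmod : Nat.card (Sylow 3 H) % 3 = 1 := card_sylow_modEq_one 3 H
  have := Nat.le_of_dvd (by norm_num) hdvd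
  interval_cases Nat.card (Sylow 3 H) <;> lia

lemma card_normalizer_sylow_three (hH : Nat.card H = 24) (hcard : Nat.card (Sylow 3 H) = 4)
    (P : Sylow 3 H) : Nat.card (Subgroup.normalizer (P : Set H)) = 6 := by
  have := Nat.finite_of_card_ne_zero (hH ▸ by decide : Nat.card H ≠ 0)
  have := Fact.mk Nat.prime_three
  have hmul := (Subgroup.normalizer (P : Set H)).index_mul_card
  rw [← P.card_eq_index_normalizer, hcard, hH] at hmul
  lia

lemma card_ker_toPermHom_sylow_three (hH : Nat.card H = 24) (hcard : Nat.card (Sylow 3 H) = 4) :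
    Nat.card (MulAction.toPermHom H (Sylow 3 H)).ker ∈ ({1, 2, 3} : Set ℕ) := by
  have := Nat.finite_of_card_ne_zero (hH ▸ by decide : Nat.card H ≠ 0)
  have := Fact.mk Nat.prime_three
  obtain ⟨P⟩ : Nonempty (Sylow 3 H) := inferInstance
  have hle : (MulAction.toPermHom H (Sylow 3 H)).ker ≤ Subgroup.normalizer (P : Set H) := by
    intro h hh
    rw [← Sylow.smul_eq_iff_mem_normalizer]
    exact DFunLike.congr_fun (MonoidHom.mem_ker.1 hh) P
  have hnorm := card_normalizer_sylow_three hH hcard P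
  have hdvd := Subgroup.card_dvd_of_le hle
  have hne : Nat.card (MulAction.toPermHom H (Sylow 3 H)).ker ≠ 6 := by
    intro h6
    have heq := Subgroup.eq_of_le_of_card_ge hle (by rw [h6, hnorm])
    have : (Subgroup.normalizer (P : Set H)).Normal := heq ▸ MonoidHom.normal_ker _
    have := P.normal_of_normalizer_normal this
    have := P.unique_of_normal this
    simp at hcard
  rw [hnorm] at hdvd
  have := Nat.le_of_dvd (by norm_num) hdvd
  interval_cases Nat.card (MulAction.toPermHom H (Sylow 3 H)).ker <;> simp_all

lemma exists_normal_or_mulEquiv_perm_of_card_eq_twentyFour (hH : Nat.card H = 24) :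
    (∃ M : Subgroup H, M.Normal ∧ (Nat.card M).Prime) ∨ Nonempty (H ≃* Equiv.Perm (Fin 4)) := by
  have := Nat.finite_of_card_ne_zero (hH ▸ by decide : Nat.card H ≠ 0)
  have := Fact.mk Nat.prime_three
  rcases card_sylow_three_eq_one_or_four hH with hcard | hcard
  · obtain ⟨Q⟩ : Nonempty (Sylow 3 H) := inferInstance
    have : Subsingleton (Sylow 3 H) := (Nat.card_eq_one_iff_unique.1 hcard).1
    refine .inl ⟨Q, Q.normal_of_subsingleton, ?_⟩
    rw [card_sylow_three_of_card_eq hH]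
    exact Nat.prime_three
  · let f := MulAction.toPermHom H (Sylow 3 H)
    have hprime {p : ℕ} (hp : p.Prime) (hf : Nat.card f.ker = p) :
        ∃ M : Subgroup H, M.Normal ∧ (Nat.card M).Prime := ⟨f.ker, inferInstance, hf ▸ hp⟩
    rcases card_ker_toPermHom_sylow_three hH hcard with h | h | h
    · let e : Sylow 3 H ≃ Fin 4 := Finite.equivFinOfCardEq hcard
      have hinj : Function.Injective f := f.ker_eq_bot_iff.1 (Subgroup.card_eq_one.1 h)
      have hperm : Nat.card H = Nat.card (Equiv.Perm (Sylow 3 H)) := by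
        rw [Nat.card_perm, hcard, hH]
        rfl
      exact .inr ⟨(MulEquiv.ofBijective f
        ((Nat.bijective_iff_injective_and_card f).2 ⟨hinj, hperm⟩)).trans e.permCongrHom⟩
    · exact .inl (hprime Nat.prime_two h)
    · exact .inl (hprime Nat.prime_three h)

end CardTwentyFour

lemma FixesTwoPoints.exists_isFixedBlock_or_mulEquiv_perm {H X : Type*} [Group H] [MulAction H X]
    [Finite H] [Finite X] (hfix : FixesTwoPoints H X) {χ : H →* ℤˣ} (hχ : Function.Surjective χ) :
    (∃ s : Set X, s.ncard = 2 ∧ MulAction.IsFixedBlock H s) ∨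
      Nonempty (H ≃* Equiv.Perm (Fin 4)) := by
  rcases hfix.exists_isFixedBlock_or_card_eq_twentyFour hχ with hs | hcard
  · exact .inl hs
  · exact (exists_normal_or_mulEquiv_perm_of_card_eq_twentyFour hcard).imp_left fun ⟨M, _, hM⟩ ↦
      hfix.exists_isFixedBlock_of_normal_of_prime_card M hM

section ProjectiveLine

open MulAction OnePoint
open scoped MatrixGroups Pointwise

variable {K : Type*} [Field K]

/-- `g` is diagonal or antidiagonal, that is, lies in the normalizer of the split Cartan subgroup of
`GL₂(K)`. -/
def IsMonomial (g : GL (Fin 2) K) : Prop :=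
  (g 0 1 = 0 ∧ g 1 0 = 0) ∨ (g 0 0 = 0 ∧ g 1 1 = 0)

lemma mem_center_GL_two_iff {g : GL (Fin 2) K} :
    g ∈ Subgroup.center (GL (Fin 2) K) ↔ g 0 1 = 0 ∧ g 1 0 = 0 ∧ g 0 0 = g 1 1 := by
  rw [GeneralLinearGroup.mem_center_iff_val_mem_range_scalar]
  constructor
  · rintro ⟨c, hc⟩
    simp [← hc]
  · rintro ⟨h01, h10, hdiag⟩
    refine ⟨g 0 0, ?_⟩
    ext i j
    fin_cases i <;> fin_cases j <;> simp [h01, h10, hdiag]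

lemma conj_mem_center_iff {G : Type*} [Group G] {g : G} (x : G) :
    x * g * x⁻¹ ∈ Subgroup.center G ↔ g ∈ Subgroup.center G := by
  rw [Subgroup.Normal.mem_comm_iff inferInstance, inv_mul_cancel_left]

lemma det_eq_sq_of_mem_center {g : GL (Fin 2) K} (hg : g ∈ Subgroup.center (GL (Fin 2) K)) :
    g.val.det = g 0 0 * g 0 0 := by
  obtain ⟨h01, -, hdiag⟩ := mem_center_GL_two_iff.1 hg
  simp [det_fin_two, h01, hdiag]

lemma det_conj (x g : GL (Fin 2) K) : (x * g * x⁻¹).val.det = g.val.det :=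
  det_units_conj x g.val

lemma trace_conj (x g : GL (Fin 2) K) : (x * g * x⁻¹).val.trace = g.val.trace :=
  trace_units_conj x g.val

variable [DecidableEq K]

lemma exists_smul_eq_infty_and_smul_eq_zero {P Q : OnePoint K} (hPQ : P ≠ Q) :
    ∃ y : GL (Fin 2) K, y • P = ∞ ∧ y • Q = (0 : K) := by
  induction P using OnePoint.rec with
  | infty =>
    induction Q using OnePoint.rec with
    | infty => exact absurd rfl hPQ
    | coe q =>
      refine ⟨.mkOfDetNeZero !![1, -q; 0, 1] (by simp), ?_, ?_⟩ <;>
        simp [smul_infty_eq_ite, smul_some_eq_ite, GeneralLinearGroup.mkOfDetNeZero]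
  | coe p =>
    induction Q using OnePoint.rec with
    | infty =>
      refine ⟨.mkOfDetNeZero !![0, 1; 1, -p] (by simp), ?_, ?_⟩ <;>
        simp [smul_infty_eq_ite, smul_some_eq_ite, GeneralLinearGroup.mkOfDetNeZero]
    | coe q =>
      have hqp : q + -p ≠ 0 := fun h ↦ hPQ (congrArg OnePoint.some (by linear_combination -h))
      refine ⟨.mkOfDetNeZero !![1, -q; 1, -p] (by simpa [add_comm] using hqp), ?_, ?_⟩ <;>
        simp [smul_some_eq_ite, GeneralLinearGroup.mkOfDetNeZero, hqp]

lemma smul_zero_eq_zero_iff {g : GL (Fin 2) K} :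
    g • ((0 : K) : OnePoint K) = (0 : K) ↔ g 0 1 = 0 := by
  have hdet := g.det_ne_zero
  rw [det_fin_two] at hdet
  by_cases h : g 1 1 = 0 <;> simp_all [smul_some_eq_ite]

lemma smul_zero_eq_infty_iff {g : GL (Fin 2) K} :
    g • ((0 : K) : OnePoint K) = ∞ ↔ g 1 1 = 0 := by
  simp [smul_some_eq_ite]

lemma smul_infty_eq_zero_iff {g : GL (Fin 2) K} :
    g • (∞ : OnePoint K) = (0 : K) ↔ g 0 0 = 0 := by
  have hdet := g.det_ne_zero
  rw [det_fin_two] at hdet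
  by_cases h : g 1 0 = 0 <;> simp_all [smul_infty_eq_ite]

lemma isMonomial_of_mem_pair {g : GL (Fin 2) K}
    (h_infty : g • (∞ : OnePoint K) = ∞ ∨ g • (∞ : OnePoint K) = (0 : K))
    (h_zero : g • ((0 : K) : OnePoint K) = ∞ ∨ g • ((0 : K) : OnePoint K) = (0 : K)) :
    IsMonomial g := by
  have hdet := g.det_ne_zero
  rw [det_fin_two] at hdet
  rw [smul_infty_eq_self_iff, smul_infty_eq_zero_iff] at h_infty
  rw [smul_zero_eq_infty_iff, smul_zero_eq_zero_iff] at h_zero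
  rw [IsMonomial]
  grind

lemma exists_conj_isMonomial_of_isFixedBlock {G : Subgroup (GL (Fin 2) K)} {s : Set (OnePoint K)}
    (hs : s.ncard = 2) (hG : IsFixedBlock G s) :
    ∃ x : GL (Fin 2) K, ∀ g ∈ G, IsMonomial (x * g * x⁻¹) := by
  obtain ⟨P, Q, hPQ, rfl⟩ := Set.ncard_eq_two.1 hs
  obtain ⟨y, hyP, hyQ⟩ := exists_smul_eq_infty_and_smul_eq_zero hPQ
  have hmem (g) (hg : g ∈ G) {R : OnePoint K} (hR : R ∈ ({P, Q} : Set (OnePoint K))) :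
      (y * g * y⁻¹) • y • R = ∞ ∨ (y * g * y⁻¹) • y • R = (0 : K) := by
    have hgR : g • R ∈ ({P, Q} : Set (OnePoint K)) := hG ⟨g, hg⟩ ▸ Set.smul_mem_smul_set hR
    rw [mul_smul, inv_smul_smul, mul_smul, ← hyP, ← hyQ]
    exact hgR.imp (congrArg (y • ·)) (congrArg (y • ·))
  refine ⟨y, fun g hg ↦ isMonomial_of_mem_pair ?_ ?_⟩
  · simpa only [hyP] using hmem g hg (Set.mem_insert P {Q})
  · simpa only [hyQ] using hmem g hg (Set.mem_insert_of_mem P rfl)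

lemma fixedBy_eq_of_diagonal {g : GL (Fin 2) K} (h01 : g 0 1 = 0) (h10 : g 1 0 = 0)
    (hne : g 0 0 ≠ g 1 1) : fixedBy (OnePoint K) g = {∞, ((0 : K) : OnePoint K)} := by
  have hdet := g.det_ne_zero
  rw [det_fin_two, h01, zero_mul, sub_zero] at hdet
  ext P
  induction P using OnePoint.rec with
  | infty => simp [smul_infty_eq_self_iff, h10]
  | coe z =>
    have hfix : g 0 0 * z / g 1 1 = z ↔ z = 0 := by
      rw [div_eq_iff (right_ne_zero_of_mul hdet), mul_comm z]
      simp [hne]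
    simp [smul_some_eq_ite, h01, h10, right_ne_zero_of_mul hdet, hfix]

lemma fixedBy_eq_of_antidiagonal {g : GL (Fin 2) K} {r : K} (h00 : g 0 0 = 0) (h11 : g 1 1 = 0)
    (hr : g 0 1 * g 1 0 = r * r) :
    fixedBy (OnePoint K) g = {((r / g 1 0 : K) : OnePoint K), ((-r / g 1 0 : K) : OnePoint K)} := by
  have hdet := g.det_ne_zero
  rw [det_fin_two, h00, zero_mul, zero_sub, neg_ne_zero] at hdet
  have hc : g 1 0 ≠ 0 := right_ne_zero_of_mul hdet
  ext P
  induction P using OnePoint.rec with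
  | infty => simp [smul_infty_eq_self_iff, hc]
  | coe z =>
    have hfix : g • (z : OnePoint K) = z ↔ (z * g 1 0) * (z * g 1 0) = r * r := by
      rw [← hr, smul_some_eq_ite, h00, h11, zero_mul, zero_add, add_zero]
      split_ifs with hz
      · simpa [(mul_eq_zero_iff_left hc).1 hz, eq_comm] using hdet
      · rw [coe_eq_coe, div_eq_iff hz]
        grind
    rw [mem_fixedBy, hfix, mul_self_eq_mul_self_iff, ← eq_div_iff hc, ← eq_div_iff hc]
    simp

lemma ncard_fixedBy_eq_two_or_trace_eq_zero (h2 : (2 : K) ≠ 0) {g : GL (Fin 2) K}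
    (hg : g ∉ Subgroup.center (GL (Fin 2) K)) (hloc : ∃ x, IsMonomial (x * g * x⁻¹)) :
    (fixedBy (OnePoint K) g).ncard = 2 ∨ g.val.trace = 0 ∧ ¬ IsSquare (-g.val.det) := by
  obtain ⟨x, hx⟩ := hloc
  rw [← det_conj x, ← trace_conj x]
  rw [← conj_mem_center_iff x, mem_center_GL_two_iff] at hg
  have hcard : (fixedBy (OnePoint K) (x * g * x⁻¹)).ncard = (fixedBy (OnePoint K) g).ncard := by
    rw [← smul_fixedBy, Set.ncard_smul_set]
  rw [← hcard]
  generalize x * g * x⁻¹ = A at hx hg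
  rcases hx with ⟨h01, h10⟩ | ⟨h00, h11⟩
  · left
    rw [fixedBy_eq_of_diagonal h01 h10 fun h ↦ hg ⟨h01, h10, h⟩]
    exact Set.ncard_pair (infty_ne_coe 0)
  · refine or_iff_not_imp_right.2 fun hsq ↦ ?_
    have hdet : A 0 1 * A 1 0 ≠ 0 := by
      simpa [det_fin_two, h00] using A.det_ne_zero
    obtain ⟨r, hr⟩ : IsSquare (A 0 1 * A 1 0) := by
      simpa [trace_fin_two, det_fin_two, h00, h11] using hsq
    rw [fixedBy_eq_of_antidiagonal h00 h11 hr, Set.ncard_pair]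
    have hr0 : r ≠ 0 := by rintro rfl; simp [hr] at hdet
    rw [Ne, coe_eq_coe, div_left_inj' (right_ne_zero_of_mul hdet)]
    grind

lemma mul_mem_center_of_trace_eq_zero {P Q : OnePoint K} (hPQ : P ≠ Q) {g h : GL (Fin 2) K}
    (hg : g.val.trace = 0) (hh : h.val.trace = 0) (hgP : g • P = P) (hgQ : g • Q = Q)
    (hhP : h • P = P) (hhQ : h • Q = Q) : g * h ∈ Subgroup.center (GL (Fin 2) K) := by
  obtain ⟨y, hyP, hyQ⟩ := exists_smul_eq_infty_and_smul_eq_zero hPQ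
  have hdiag {k : GL (Fin 2) K} (hk : k.val.trace = 0) (hkP : k • P = P) (hkQ : k • Q = Q) :
      (y * k * y⁻¹) 0 1 = 0 ∧ (y * k * y⁻¹) 1 0 = 0 ∧
        (y * k * y⁻¹) 0 0 = -(y * k * y⁻¹) 1 1 := by
    refine ⟨smul_zero_eq_zero_iff.1 ?_, smul_infty_eq_self_iff.1 ?_, ?_⟩
    · rw [mul_smul, mul_smul, ← hyQ, inv_smul_smul, hkQ]
    · rw [mul_smul, mul_smul, ← hyP, inv_smul_smul, hkP]
    · rwa [← trace_conj y, trace_fin_two, add_eq_zero_iff_eq_neg] at hk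
  obtain ⟨g01, g10, g00⟩ := hdiag hg hgP hgQ
  obtain ⟨h01, h10, h00⟩ := hdiag hh hhP hhQ
  rw [← conj_mem_center_iff y, ← conj_mul, mem_center_GL_two_iff]
  generalize y * g * y⁻¹ = A at *
  generalize y * h * y⁻¹ = B at *
  simp [mul_apply, Fin.sum_univ_two, g01, g10, g00, h01, h10, h00]

end ProjectiveLine

section FixedPair

open MulAction
open scoped Pointwise

variable {H X : Type*} [Group H] [MulAction H X] {P Q : X}

lemma fixes_or_swaps_of_isFixedBlock_pair (hPQ : P ≠ Q)
    (hfix : IsFixedBlock H ({P, Q} : Set X)) (h : H) :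
    (h • P = P ∧ h • Q = Q) ∨ (h • P = Q ∧ h • Q = P) := by
  have hmem {R : X} (hR : R ∈ ({P, Q} : Set X)) : h • R = P ∨ h • R = Q :=
    (hfix h).subset (Set.smul_mem_smul_set hR)
  have hne : h • P ≠ h • Q := (smul_left_cancel h).mt hPQ
  grind [hmem (Set.mem_insert P {Q}), hmem (Set.mem_insert_of_mem P rfl)]

lemma commute_of_swaps_of_isFixedBlock_pair (hPQ : P ≠ Q)
    (hfix : IsFixedBlock H ({P, Q} : Set X))
    (hmul : ∀ t u : H, t ≠ 1 → u ≠ 1 → t • P = P → t • Q = Q → u • P = P → u • Q = Q → t * u = 1)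
    {g : H} (hgP : g • P = Q) (hgQ : g • Q = P) (h : H) : Commute g h := by
  have hfixing {t : H} (htP : t • P = P) (htQ : t • Q = Q) : Commute g t := by
    by_cases ht : t = 1
    · exact ht ▸ Commute.one_right g
    have hconjP : (g * t * g⁻¹) • P = P := by
      rw [mul_smul, mul_smul, ← hgQ, inv_smul_smul, htQ]
    have hconjQ : (g * t * g⁻¹) • Q = Q := by
      rw [mul_smul, mul_smul, ← hgP, inv_smul_smul, htP]
    have hconj : g * t * g⁻¹ = t := mul_left_cancel <|
      (hmul t _ ht (conj_eq_one_iff.not.2 ht) htP htQ hconjP hconjQ).trans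
        (hmul t t ht ht htP htQ htP htQ).symm
    exact mul_inv_eq_iff_eq_mul.1 hconj
  rcases fixes_or_swaps_of_isFixedBlock_pair hPQ hfix h with ⟨hP, hQ⟩ | ⟨hP, hQ⟩
  · exact hfixing hP hQ
  · have hprod : Commute g (h * g) :=
      hfixing (by rw [mul_smul, hgP, hQ]) (by rw [mul_smul, hgQ, hP])
    simpa using hprod.mul_right (Commute.refl g).inv_right

lemma isFixedBlock_fixedBy_of_forall_commute {g : H} (hg : ∀ h : H, Commute g h) :
    IsFixedBlock H (fixedBy X g) := fun h ↦ by
  rw [smul_fixedBy, ← (hg h).eq, mul_inv_cancel_right]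

end FixedPair

section ProjectiveLinearGroup

open MulAction OnePoint
open scoped MatrixGroups Pointwise

variable {F K : Type*} [Field F]

/-- The image in `PGL₂(F)` of a subgroup of `GL₂(F)`. -/
abbrev projectiveImage (G : Subgroup (GL (Fin 2) F)) : Subgroup PGL(2, F) :=
  G.map ProjGenLinGroup.mk

variable [Field K] [Algebra F K]

lemma map_mem_center_iff {g : GL (Fin 2) F} :
    g.map (algebraMap F K) ∈ Subgroup.center (GL (Fin 2) K) ↔
      g ∈ Subgroup.center (GL (Fin 2) F) := by
  simp [mem_center_GL_two_iff]

lemma IsMonomial.map {g : GL (Fin 2) F} (hg : IsMonomial g) :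
    IsMonomial (g.map (algebraMap F K)) := by
  simpa [IsMonomial] using hg

lemma onePoint_map_algebraMap_injective :
    Function.Injective (OnePoint.map (algebraMap F K)) :=
  Option.map_injective (algebraMap F K).injective

variable [DecidableEq K]

lemma scalar_smul_onePoint (u : Kˣ) (P : OnePoint K) :
    GeneralLinearGroup.scalar (Fin 2) u • P = P := by
  induction P using OnePoint.rec with
  | infty => simp [smul_infty_eq_self_iff]
  | coe t => simp [smul_some_eq_ite]

/-- `PGL₂(F)` acts on the projective line over every extension `K` of `F` by Möbius
transformations. -/
noncomputable instance : MulAction PGL(2, F) (OnePoint K) :=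
  letI := ProjGenLinGroup.mulActionOfGL (scalar_smul_onePoint (K := K))
  MulAction.compHom (OnePoint K) (ProjGenLinGroup.map (algebraMap F K))

lemma pgl_mk_smul (g : GL (Fin 2) F) (P : OnePoint K) :
    ProjGenLinGroup.mk g • P = g.map (algebraMap F K) • P := rfl

lemma onePoint_map_pgl_smul [DecidableEq F] (h : PGL(2, F)) (P : OnePoint F) :
    OnePoint.map (algebraMap F K) (h • P) = h • OnePoint.map (algebraMap F K) P := by
  obtain ⟨g, rfl⟩ := ProjGenLinGroup.mk_surjective h
  exact OnePoint.map_smul (algebraMap F K) g P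

lemma pgl_mk_smul_self [DecidableEq F] (g : GL (Fin 2) F) (P : OnePoint F) :
    ProjGenLinGroup.mk g • P = g • P := by
  rw [pgl_mk_smul, Algebra.algebraMap_self, GeneralLinearGroup.map_id, MonoidHom.id_apply]

lemma mem_fixedBy_map_iff [DecidableEq F] {h : PGL(2, F)} {P : OnePoint F} :
    OnePoint.map (algebraMap F K) P ∈ fixedBy (OnePoint K) h ↔ P ∈ fixedBy (OnePoint F) h := by
  rw [mem_fixedBy, mem_fixedBy, ← onePoint_map_pgl_smul, onePoint_map_algebraMap_injective.eq_iff]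

lemma isFixedBlock_fixedBy_of_extension [DecidableEq F] {H : Subgroup PGL(2, F)}
    {h : PGL(2, F)} (hfix : IsFixedBlock H (fixedBy (OnePoint K) h)) :
    IsFixedBlock H (fixedBy (OnePoint F) h) := by
  refine isInvariantBlock_iff_isFixedBlock.1 fun k ↦ ?_
  rintro _ ⟨P, hP, rfl⟩
  rw [← mem_fixedBy_map_iff (K := K), ← hfix k]
  exact ⟨_, mem_fixedBy_map_iff.2 hP, (onePoint_map_pgl_smul (k : PGL(2, F)) P).symm⟩

lemma fixesTwoPoints_projectiveImage (h2 : (2 : F) ≠ 0) (hsq : ∀ a : F, IsSquare (algebraMap F K a))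
    {G : Subgroup (GL (Fin 2) F)} (hloc : ∀ g ∈ G, ∃ x, IsMonomial (x * g * x⁻¹)) :
    FixesTwoPoints (projectiveImage G) (OnePoint K) := by
  rintro ⟨_, g, hgG, rfl⟩ hg
  have hgc : g ∉ Subgroup.center (GL (Fin 2) F) := fun h ↦
    hg (Subtype.ext (ProjGenLinGroup.mk_eq_one.2 h))
  have hmono : ∃ x, IsMonomial (x * g.map (algebraMap F K) * x⁻¹) := by
    obtain ⟨x, hx⟩ := hloc g hgG
    exact ⟨x.map (algebraMap F K), by simpa only [map_mul, map_inv] using hx.map⟩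
  have h2K : (2 : K) ≠ 0 := by
    simpa only [map_ofNat] using (map_ne_zero (algebraMap F K)).2 h2
  refine (ncard_fixedBy_eq_two_or_trace_eq_zero h2K (map_mem_center_iff.not.2 hgc)
    hmono).resolve_right fun h ↦ h.2 ?_
  have hdet : -(g.map (algebraMap F K)).val.det = algebraMap F K (-g.val.det) := by
    simp [RingHom.map_det, GeneralLinearGroup.map]
  exact hdet ▸ hsq _

lemma mk_mul_mk_eq_one_of_trace_eq_zero {P Q : OnePoint K} (hPQ : P ≠ Q) {g h : GL (Fin 2) F}
    (hg : g.val.trace = 0) (hh : h.val.trace = 0)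
    (hgP : ProjGenLinGroup.mk g • P = P) (hgQ : ProjGenLinGroup.mk g • Q = Q)
    (hhP : ProjGenLinGroup.mk h • P = P) (hhQ : ProjGenLinGroup.mk h • Q = Q) :
    ProjGenLinGroup.mk g * ProjGenLinGroup.mk h = 1 := by
  have htrace {k : GL (Fin 2) F} (hk : k.val.trace = 0) :
      (k.map (algebraMap F K)).val.trace = 0 := by
    simpa [trace_fin_two, ← map_add] using hk
  rw [← map_mul, ProjGenLinGroup.mk_eq_one, ← map_mem_center_iff (K := K), map_mul]
  exact mul_mem_center_of_trace_eq_zero hPQ (htrace hg) (htrace hh) hgP hgQ hhP hhQ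

lemma ncard_fixedBy_mk_eq_two_or_trace_eq_zero [DecidableEq F] (h2 : (2 : F) ≠ 0)
    {g : GL (Fin 2) F} (hg : ProjGenLinGroup.mk g ≠ 1)
    (hloc : ∃ x, IsMonomial (x * g * x⁻¹)) :
    (fixedBy (OnePoint F) (ProjGenLinGroup.mk g)).ncard = 2 ∨
      g.val.trace = 0 ∧ ¬ IsSquare (-g.val.det) := by
  have hfixed : fixedBy (OnePoint F) (ProjGenLinGroup.mk g) = fixedBy (OnePoint F) g := by
    ext P
    rw [mem_fixedBy, mem_fixedBy, pgl_mk_smul_self]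
  rw [hfixed]
  exact ncard_fixedBy_eq_two_or_trace_eq_zero h2 (mt ProjGenLinGroup.mk_eq_one.2 hg) hloc

lemma exists_conj_isMonomial_of_isFixedBlock_projectiveImage [DecidableEq F]
    {G : Subgroup (GL (Fin 2) F)} {s : Set (OnePoint F)} (hs : s.ncard = 2)
    (hfix : IsFixedBlock (projectiveImage G) s) :
    ∃ x : GL (Fin 2) F, ∀ g ∈ G, IsMonomial (x * g * x⁻¹) := by
  refine exists_conj_isMonomial_of_isFixedBlock hs fun g ↦ ?_
  have hg := hfix ⟨_, g, g.2, rfl⟩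
  refine Eq.trans (Set.image_congr fun P _ ↦ ?_) hg
  exact (pgl_mk_smul_self (g : GL (Fin 2) F) P).symm

variable [DecidableEq F] {G : Subgroup (GL (Fin 2) F)} {s : Set (OnePoint K)}

lemma FixesTwoPoints.isFixedBlock_fixedBy_of_subset
    (htwo : FixesTwoPoints (projectiveImage G) (OnePoint K)) (hs : s.ncard = 2)
    (hfix : IsFixedBlock (projectiveImage G) s) {h : projectiveImage G} (hh : h ≠ 1)
    (hsub : s ⊆ fixedBy (OnePoint K) h) :
    IsFixedBlock (projectiveImage G) (fixedBy (OnePoint F) h) := by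
  have hcard : (fixedBy (OnePoint K) h).ncard = 2 := htwo h hh
  have heq : s = fixedBy (OnePoint K) h :=
    Set.eq_of_subset_of_ncard_le hsub (by rw [hcard, hs]) (Set.finite_of_ncard_pos (by omega))
  exact isFixedBlock_fixedBy_of_extension (heq ▸ hfix)

lemma FixesTwoPoints.exists_isFixedBlock_fixedBy (h2 : (2 : F) ≠ 0)
    (hloc : ∀ g ∈ G, ∃ x, IsMonomial (x * g * x⁻¹))
    (htwo : FixesTwoPoints (projectiveImage G) (OnePoint K)) (hs : s.ncard = 2)
    (hfix : IsFixedBlock (projectiveImage G) s) {g : projectiveImage G} (hg : g ≠ 1)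
    (hsplit : (fixedBy (OnePoint F) g).ncard = 2) :
    ∃ h : projectiveImage G, (fixedBy (OnePoint F) h).ncard = 2 ∧
      IsFixedBlock (projectiveImage G) (fixedBy (OnePoint F) h) := by
  by_cases hT : ∃ h : projectiveImage G,
      h ≠ 1 ∧ (fixedBy (OnePoint F) h).ncard = 2 ∧ s ⊆ fixedBy (OnePoint K) h
  · obtain ⟨h, hh, hsplit, hsub⟩ := hT
    exact ⟨h, hsplit, htwo.isFixedBlock_fixedBy_of_subset hs hfix hh hsub⟩
  push Not at hT
  refine ⟨g, hsplit, isFixedBlock_fixedBy_of_forall_commute fun h ↦ ?_⟩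
  obtain ⟨P, Q, hPQ, rfl⟩ := Set.ncard_eq_two.1 hs
  have htrace (t : projectiveImage G) (ht : t ≠ 1) (htP : t • P = P) (htQ : t • Q = Q) :
      ∃ k : GL (Fin 2) F, ProjGenLinGroup.mk k = t ∧ k.val.trace = 0 := by
    obtain ⟨_, k, hk, rfl⟩ := t
    refine ⟨k, rfl, ((ncard_fixedBy_mk_eq_two_or_trace_eq_zero h2 (fun h ↦ ht (Subtype.ext h))
      (hloc k hk)).resolve_left fun hk2 ↦ hT _ ht hk2 ?_).1⟩
    exact Set.pair_subset htP htQ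
  have hgswap : g • P = Q ∧ g • Q = P :=
    (fixes_or_swaps_of_isFixedBlock_pair hPQ hfix g).resolve_left fun h ↦
      hT g hg hsplit (Set.pair_subset h.1 h.2)
  refine commute_of_swaps_of_isFixedBlock_pair hPQ hfix (fun t u ht hu htP htQ huP huQ ↦ ?_)
    hgswap.1 hgswap.2 h
  obtain ⟨k, hkt, hk⟩ := htrace t ht htP htQ
  obtain ⟨l, hlu, hl⟩ := htrace u hu huP huQ
  refine Subtype.ext ?_
  rw [Subgroup.coe_mul, ← hkt, ← hlu]
  exact mk_mul_mk_eq_one_of_trace_eq_zero hPQ hk hl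
    (hkt ▸ htP) (hkt ▸ htQ) (hlu ▸ huP) (hlu ▸ huQ)

end ProjectiveLinearGroup

section FiniteField

open MulAction
open scoped MatrixGroups

variable {F : Type*} [Field F]

lemma IsMonomial.center_mul {z g : GL (Fin 2) F} (hz : z ∈ Subgroup.center (GL (Fin 2) F))
    (hg : IsMonomial g) : IsMonomial (z * g) := by
  obtain ⟨h01, h10, -⟩ := mem_center_GL_two_iff.1 hz
  refine hg.imp (fun h ↦ ?_) fun h ↦ ?_ <;>
    simp [mul_apply, Fin.sum_univ_two, h01, h10, h]

lemma isMonomial_of_mem_center {z : GL (Fin 2) F} (hz : z ∈ Subgroup.center (GL (Fin 2) F)) :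
    IsMonomial z :=
  have h := mem_center_GL_two_iff.1 hz
  Or.inl ⟨h.1, h.2.1⟩

lemma exists_orderOf_eq_of_isMonomial_conj {g : GL (Fin 2) F}
    (hloc : ∃ x, IsMonomial (x * g * x⁻¹)) (hg : 2 < orderOf (ProjGenLinGroup.mk g)) :
    ∃ t : F, orderOf t = orderOf (ProjGenLinGroup.mk g) ∧ (IsSquare t ↔ IsSquare g.val.det) := by
  obtain ⟨x, hx⟩ := hloc
  have hpow (n : ℕ) : ProjGenLinGroup.mk g ^ n = 1 ↔
      (x * g * x⁻¹) ^ n ∈ Subgroup.center (GL (Fin 2) F) := by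
    rw [conj_pow, conj_mem_center_iff, ← map_pow, ProjGenLinGroup.mk_eq_one]
  rw [← det_conj x]
  generalize x * g * x⁻¹ = A at hx hpow
  rcases hx with ⟨h01, h10⟩ | ⟨h00, h11⟩
  · have hdet : A.val.det = A 0 0 * A 1 1 := by simp [det_fin_two, h01]
    have h11 : A 1 1 ≠ 0 := right_ne_zero_of_mul (hdet ▸ A.det_ne_zero)
    have hA : A.val = diagonal ![A 0 0, A 1 1] := by
      ext i j
      fin_cases i <;> fin_cases j <;> simp [h01, h10]
    refine ⟨A 0 0 / A 1 1, orderOf_eq_orderOf_iff.2 fun n ↦ ?_, ?_⟩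
    · have hAn : (A ^ n).val = diagonal (![A 0 0, A 1 1] ^ n) := by
        rw [Units.val_pow_eq_pow_val, ← diagonal_pow, ← hA]
      rw [hpow, mem_center_GL_two_iff, hAn, div_pow, div_eq_one_iff_eq (pow_ne_zero n h11)]
      simp
    · have hmul : A 0 0 / A 1 1 * (A 1 1 * A 1 1) = A 0 0 * A 1 1 := by field_simp
      have hdiv : A 0 0 * A 1 1 / (A 1 1 * A 1 1) = A 0 0 / A 1 1 := by field_simp
      rw [hdet]
      exact ⟨fun h ↦ hmul ▸ h.mul (.mul_self _), fun h ↦ hdiv ▸ h.div (.mul_self _)⟩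
  · have hsq : ProjGenLinGroup.mk g ^ 2 = 1 := by
      rw [hpow, mem_center_GL_two_iff, sq]
      simp [mul_apply, Fin.sum_univ_two, h00, h11, mul_comm]
    exact absurd (orderOf_le_of_pow_eq_one two_pos hsq) hg.not_ge

section Card

variable [Fintype F]

lemma orderOf_dvd_card_sub_one {t : F} (ht : t ≠ 0) : orderOf t ∣ Fintype.card F - 1 :=
  orderOf_dvd_of_pow_eq_one (FiniteField.pow_card_sub_one_eq_one t ht)

lemma card_mod_three_of_orderOf_eq {t : F} (ht : orderOf t = 3) : Fintype.card F % 3 = 1 := by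
  have ht0 : t ≠ 0 := by rintro rfl; simp at ht
  have hdvd := ht ▸ orderOf_dvd_card_sub_one ht0
  have := Fintype.one_lt_card (α := F)
  omega

lemma card_mod_eight_of_orderOf_eq_of_not_isSquare {t : F} (ht : orderOf t = 4)
    (hsq : ¬ IsSquare t) : Fintype.card F % 8 = 5 := by
  have ht0 : t ≠ 0 := fun h ↦ hsq (h ▸ IsSquare.zero)
  have hchar : ringChar F ≠ 2 := fun h ↦ hsq (FiniteField.isSquare_of_char_two h t)
  have hdvd := ht ▸ orderOf_dvd_card_sub_one ht0
  have hndvd : ¬ 4 ∣ Fintype.card F / 2 := by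
    rwa [FiniteField.isSquare_iff hchar ht0, ← orderOf_dvd_iff_pow_eq_one, ht] at hsq
  have := Fintype.one_lt_card (α := F)
  omega

lemma isSquare_algebraMap_of_card_eq_sq {K : Type*} [Field K] [Fintype K] [Algebra F K]
    (hcard : Fintype.card K = Fintype.card F ^ 2) (a : F) : IsSquare (algebraMap F K a) := by
  by_cases hchar : ringChar K = 2
  · exact FiniteField.isSquare_of_char_two hchar _
  by_cases ha : a = 0
  · rw [ha, map_zero]
    exact IsSquare.zero
  have hhalf : Fintype.card K / 2 = (Fintype.card F - 1) * ((Fintype.card F + 1) / 2) := by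
    have hodd := Nat.odd_iff.2 (FiniteField.odd_card_of_char_ne_two hchar)
    rw [hcard, Nat.odd_pow_iff two_ne_zero] at hodd
    obtain ⟨m, hm⟩ := hodd
    have hsq : (2 * m + 1) ^ 2 = 2 * (2 * m * (m + 1)) + 1 := by ring
    have hmid : (2 * m + 1 + 1) / 2 = m + 1 := by omega
    rw [hcard, hm, hmid, hsq, Nat.add_sub_cancel]
    omega
  rw [FiniteField.isSquare_iff hchar (by simpa using ha), hhalf, pow_mul, ← map_pow,
    FiniteField.pow_card_sub_one_eq_one a ha, map_one, one_pow]

section DetQuadraticChar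

variable [DecidableEq F]

/-- The quadratic character of the determinant, which is trivial on scalar matrices and hence
defined on `PGL₂(F)`. -/
noncomputable def detQuadraticChar (F : Type*) [Field F] [Fintype F] [DecidableEq F] :
    PGL(2, F) →* ℤˣ :=
  ProjGenLinGroup.lift ((quadraticChar F).toUnitHom.comp GeneralLinearGroup.det) <| by
    ext u
    simp

lemma detQuadraticChar_mk_eq_one_iff (g : GL (Fin 2) F) :
    detQuadraticChar F (ProjGenLinGroup.mk g) = 1 ↔ IsSquare g.val.det := by
  rw [← quadraticChar_one_iff_isSquare g.det_ne_zero, Units.ext_iff]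
  rfl

lemma detQuadraticChar_mk_eq_neg_one_iff (g : GL (Fin 2) F) :
    detQuadraticChar F (ProjGenLinGroup.mk g) = -1 ↔ ¬ IsSquare g.val.det := by
  rw [← detQuadraticChar_mk_eq_one_iff, ← Ne, Int.units_ne_iff_eq_neg]

lemma surjective_detQuadraticChar_comp_subtype {G : Subgroup (GL (Fin 2) F)}
    (hdet : ∃ g ∈ G, ¬ IsSquare g.val.det) :
    Function.Surjective ((detQuadraticChar F).comp (projectiveImage G).subtype) := by
  obtain ⟨g, hg, hgdet⟩ := hdet
  intro u
  rcases Int.units_eq_one_or u with rfl | rfl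
  · exact ⟨1, map_one _⟩
  · exact ⟨⟨_, g, hg, rfl⟩, (detQuadraticChar_mk_eq_neg_one_iff g).2 hgdet⟩

end DetQuadraticChar

/-- The primitive fourth root of unity provided by a `4`-cycle is a nonsquare because `4`-cycles are
odd permutations. -/
lemma card_mod_twentyFour_of_mulEquiv_perm {G : Subgroup (GL (Fin 2) F)}
    (hloc : ∀ g ∈ G, ∃ x, IsMonomial (x * g * x⁻¹)) (hdet : ∃ g ∈ G, ¬ IsSquare g.val.det)
    (e : projectiveImage G ≃* Equiv.Perm (Fin 4)) : Fintype.card F % 24 = 13 := by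
  classical
  have hsign : ((detQuadraticChar F).comp (projectiveImage G).subtype).comp e.symm.toMonoidHom =
      Equiv.Perm.sign := Equiv.Perm.eq_sign_of_surjective_hom
    ((surjective_detQuadraticChar_comp_subtype hdet).comp e.symm.surjective)
  have hroot (σ : Equiv.Perm (Fin 4)) (hσ : 2 < orderOf σ) :
      ∃ t : F, orderOf t = orderOf σ ∧ (IsSquare t ↔ Equiv.Perm.sign σ = 1) := by
    obtain ⟨g, hg, hgσ⟩ := (e.symm σ).2
    have horder : orderOf (ProjGenLinGroup.mk g) = orderOf σ := by
      rw [← orderOf_injective e.symm.toMonoidHom e.symm.injective σ, ← Subgroup.orderOf_coe]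
      exact congrArg orderOf hgσ
    obtain ⟨t, ht, htsq⟩ := exists_orderOf_eq_of_isMonomial_conj (hloc g hg) (horder ▸ hσ)
    refine ⟨t, ht.trans horder, ?_⟩
    rw [htsq, ← detQuadraticChar_mk_eq_one_iff, ← hsign]
    exact Eq.congr_left (congrArg _ hgσ)
  have h3 : orderOf (Equiv.swap 0 1 * Equiv.swap 1 2 : Equiv.Perm (Fin 4)) = 3 :=
    orderOf_eq_prime (by decide) (by decide)
  have h4 : orderOf (finRotate 4) = 4 :=
    orderOf_eq_prime_pow (p := 2) (n := 1) (by decide) (by decide)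
  obtain ⟨t, ht, -⟩ := hroot _ (h3.symm ▸ (by decide : 2 < 3))
  obtain ⟨u, hu, husq⟩ := hroot _ (h4.symm ▸ (by decide : 2 < 4))
  have hmod3 := card_mod_three_of_orderOf_eq (ht.trans h3)
  have hmod8 := card_mod_eight_of_orderOf_eq_of_not_isSquare (hu.trans h4)
    (husq.not.2 (by decide))
  omega

end Card

variable [Finite F]

lemma two_ne_zero_of_not_isSquare {a : F} (ha : ¬ IsSquare a) : (2 : F) ≠ 0 :=
  Ring.two_ne_zero fun hchar ↦ ha (FiniteField.isSquare_of_char_two hchar a)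

lemma not_isSquare_of_not_isSquare_neg {a b : F} (ha : ¬ IsSquare a) (hna : ¬ IsSquare (-a))
    (hnb : ¬ IsSquare (-b)) : ¬ IsSquare b := by
  classical
  cases nonempty_fintype F
  rw [← quadraticChar_neg_one_iff_not_isSquare] at *
  rw [← neg_one_mul, map_mul] at hna hnb
  grind

lemma exists_conj_isMonomial_of_forall_isSquare {G : Subgroup (GL (Fin 2) F)}
    (hloc : ∀ g ∈ G, ∃ x, IsMonomial (x * g * x⁻¹)) (hdet : ∃ g ∈ G, ¬ IsSquare g.val.det)
    (hcenter : ∀ g ∈ G, IsSquare g.val.det → g ∈ Subgroup.center (GL (Fin 2) F)) :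
    ∃ x : GL (Fin 2) F, ∀ g ∈ G, IsMonomial (x * g * x⁻¹) := by
  classical
  cases nonempty_fintype F
  obtain ⟨g₀, hg₀, hdet₀⟩ := hdet
  obtain ⟨x, hx⟩ := hloc g₀ hg₀
  refine ⟨x, fun g hg ↦ ?_⟩
  by_cases hgdet : IsSquare g.val.det
  · exact isMonomial_of_mem_center ((conj_mem_center_iff x).2 (hcenter g hg hgdet))
  · have hquot : IsSquare (g * g₀⁻¹).val.det := by
      rw [← detQuadraticChar_mk_eq_neg_one_iff] at hdet₀ hgdet
      rw [← detQuadraticChar_mk_eq_one_iff, map_mul, map_inv, map_mul, map_inv, hdet₀,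
        hgdet, mul_inv_cancel]
    have hmono := hx.center_mul
      ((conj_mem_center_iff x).2 (hcenter _ (G.mul_mem hg (G.inv_mem hg₀)) hquot))
    rwa [conj_mul, inv_mul_cancel_right] at hmono

lemma exists_conj_isMonomial_of_forall_ncard_fixedBy_ne_two [DecidableEq F]
    {G : Subgroup (GL (Fin 2) F)}
    (hloc : ∀ g ∈ G, ∃ x, IsMonomial (x * g * x⁻¹)) (hdet : ∃ g ∈ G, ¬ IsSquare g.val.det)
    (hsplit : ∀ h : projectiveImage G, h ≠ 1 → (fixedBy (OnePoint F) h).ncard ≠ 2) :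
    ∃ x : GL (Fin 2) F, ∀ g ∈ G, IsMonomial (x * g * x⁻¹) := by
  have h2 : (2 : F) ≠ 0 := two_ne_zero_of_not_isSquare hdet.choose_spec.2
  refine exists_conj_isMonomial_of_forall_isSquare hloc hdet fun g hg ↦ not_imp_not.1 fun hgc ↦ ?_
  have hneg {k : GL (Fin 2) F} (hk : k ∈ G) (hkc : k ∉ Subgroup.center (GL (Fin 2) F)) :
      ¬ IsSquare (-k.val.det) := by
    rw [← ProjGenLinGroup.mk_eq_one] at hkc
    exact ((ncard_fixedBy_mk_eq_two_or_trace_eq_zero h2 hkc (hloc k hk)).resolve_left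
      (hsplit ⟨_, k, hk, rfl⟩ fun h ↦ hkc (congrArg Subtype.val h))).2
  obtain ⟨g₀, hg₀, hdet₀⟩ := hdet
  have hg₀c : g₀ ∉ Subgroup.center (GL (Fin 2) F) := fun h ↦
    hdet₀ ⟨_, det_eq_sq_of_mem_center h⟩
  exact not_isSquare_of_not_isSquare_neg hdet₀ (hneg hg₀ hg₀c) (hneg hg hgc)

lemma exists_conj_isMonomial_of_isFixedBlock_extension {K : Type*} [Field K] [Algebra F K]
    [DecidableEq K] {G : Subgroup (GL (Fin 2) F)} {s : Set (OnePoint K)}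
    (hloc : ∀ g ∈ G, ∃ x, IsMonomial (x * g * x⁻¹)) (hdet : ∃ g ∈ G, ¬ IsSquare g.val.det)
    (htwo : FixesTwoPoints (projectiveImage G) (OnePoint K)) (hs : s.ncard = 2)
    (hfix : IsFixedBlock (projectiveImage G) s) :
    ∃ x : GL (Fin 2) F, ∀ g ∈ G, IsMonomial (x * g * x⁻¹) := by
  classical
  by_cases hsplit : ∃ h : projectiveImage G, h ≠ 1 ∧ (fixedBy (OnePoint F) h).ncard = 2
  · obtain ⟨g, hg, hg2⟩ := hsplit
    have h2 : (2 : F) ≠ 0 := two_ne_zero_of_not_isSquare hdet.choose_spec.2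
    obtain ⟨h, hh2, hhfix⟩ := htwo.exists_isFixedBlock_fixedBy h2 hloc hs hfix hg hg2
    exact exists_conj_isMonomial_of_isFixedBlock_projectiveImage hh2 hhfix
  · push Not at hsplit
    exact exists_conj_isMonomial_of_forall_ncard_fixedBy_ne_two hloc hdet hsplit

end FiniteField

theorem local_global_normalizer_split_cartan_surjective_det_general {F : Type*} [Field F] [Finite F]
    (G : Subgroup (GL (Fin 2) F)) (hloc : ∀ g ∈ G, ∃ x, IsMonomial (x * g * x⁻¹))
    (hdet : ∃ g ∈ G, ¬ IsSquare g.val.det) :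
    (∃ x : GL (Fin 2) F, ∀ g ∈ G, IsMonomial (x * g * x⁻¹)) ∨
      (Nonempty (projectiveImage G ≃* Equiv.Perm (Fin 4)) ∧ Nat.card F % 24 = 13) := by
  classical
  cases nonempty_fintype F
  have : Fact (ringChar F).Prime := ⟨CharP.char_is_prime F _⟩
  let K := FiniteField.Extension F (ringChar F) 2
  have : Finite (OnePoint K) := inferInstanceAs (Finite (Option K))
  have : Finite (ProjGenLinGroup (Fin 2) F) := Quotient.finite _
  cases nonempty_fintype K
  have hcard : Fintype.card K = Fintype.card F ^ 2 := by
    simpa only [Nat.card_eq_fintype_card] using FiniteField.natCard_extension F (ringChar F) 2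
  have htwo : FixesTwoPoints (projectiveImage G) (OnePoint K) :=
    fixesTwoPoints_projectiveImage (two_ne_zero_of_not_isSquare hdet.choose_spec.2)
      (isSquare_algebraMap_of_card_eq_sq hcard) hloc
  rcases htwo.exists_isFixedBlock_or_mulEquiv_perm
    (surjective_detQuadraticChar_comp_subtype hdet) with ⟨s, hs, hfix⟩ | ⟨⟨e⟩⟩
  · exact Or.inl (exists_conj_isMonomial_of_isFixedBlock_extension hloc hdet htwo hs hfix)
  · rw [Nat.card_eq_fintype_card]
    exact Or.inr ⟨⟨e⟩, card_mod_twentyFour_of_mulEquiv_perm hloc hdet e⟩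

/-- If every element of `G ≤ GL₂(F_ℓ)` lies in a conjugate of `N_sp`, some
element is not diagonalizable, and the determinant map `G → F_ℓˣ` is surjective, then
`G` is in a conjugate of `N_sp`, or its projective image is `S₄` and `ℓ ≡ 13 (mod 24)`. -/
theorem local_global_normalizer_split_cartan_surjective_det
    {ℓ : ℕ} [Fact ℓ.Prime] (hℓ : ℓ ≠ 2)
    (G : Subgroup (GL2 ℓ))
    (hloc : ∀ g ∈ G, ∃ x : GL2 ℓ, InNsp (x * g * x⁻¹))
    (hnd : ∃ g ∈ G, ¬ ∃ x : GL2 ℓ, IsDiag (x * g * x⁻¹))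
    (hdet : ∀ u : (ZMod ℓ)ˣ, ∃ g ∈ G, Matrix.GeneralLinearGroup.det g = u) :
    (∃ x : GL2 ℓ, ∀ g ∈ G, InNsp (x * g * x⁻¹)) ∨
    (IsS4 (projImage G) ∧ ℓ % 24 = 13) := by
  have hchar : ringChar (ZMod ℓ) ≠ 2 := (ZMod.ringChar_zmod_n ℓ).symm ▸ hℓ
  obtain ⟨a, ha⟩ := FiniteField.exists_nonsquare hchar
  obtain ⟨g, hg, hga⟩ := hdet (Units.mk0 a fun h ↦ ha (h ▸ IsSquare.zero))
  have hdet' : g.val.det = a := congrArg Units.val hga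
  have hcases := local_global_normalizer_split_cartan_surjective_det_general G hloc
    ⟨g, hg, hdet' ▸ ha⟩
  rwa [Nat.card_zmod] at hcases
end

section
/- Let ℓ be an odd prime and let G be a subgroup of GL₂(F_ℓ) such that every element of G lies in a conjugate of N_ns, some element of G does not lie in any conjugate of C_ns, and the determinant map G → F_ℓˣ is surjective. Then either G is contained in a conjugate of N_ns, or the image H of G in PGL₂(F_ℓ) is isomorphic to S₄ and ℓ ≡ 11 (mod 24). -/
open Matrix

/-!
Noncentral elements of `G` are semisimple, so the centralizers in `G` of its noncentral elements
behave like tori modulo the scalars: they are commutative, they partition the noncentral elements,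
and each has index `f ≤ 2` in its normalizer. Let `N` be the order of the image of `G` in `PGL₂`.
Counting noncentral elements by conjugacy classes of tori, a torus of order `c` modulo scalars
contributes `(1 - 1/c) / f`, and the contributions sum to `1 - 1/N`. Counting only the elements of
nonsquare determinant, which form half of `G`, shows that the tori containing such elements satisfy
`∑ 1/f = 1`. These two equations leave two cases.

* Some torus has index at most two in `G`, hence is normal in `G`. If it is split, its nonscalar
  elements have trace zero, so it has order at most two modulo scalars; the image of `G` in `PGL₂`
  then has order at most four, and `G` normalizes a nonsplit torus in this case as well.
* `N = 24`, some torus with elements of nonsquare determinant has `c = 4`, and some torus has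
  `c = 3` and four conjugates. The action on these conjugates identifies the image of `G` with
  `S₄`. Elements of order `4` and `3` in `PGL₂` satisfy `tr² = 2 det` and `tr² = det`
  respectively. Their discriminants `-tr²` and `-3 tr²` are nonsquare, and so is the determinant of
  the first, hence `-1`, `2` and `-3` are nonsquares in `F_ℓ`, that is `ℓ ≡ 11 (mod 24)`.
-/

section ArithmeticOfIndices

theorem le_two_mul_of_one_div_le_two_div {n N : ℕ} (hn : 0 < n) (hN : 0 < N)
    (h : (1 : ℚ) / n ≤ 2 / N) : N ≤ 2 * n := by
  rw [div_le_div_iff₀ (by positivity) (by positivity), one_mul] at h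
  exact_mod_cast h

theorem bound_or_eq_of_one_div_add_one_div_add_one_div {a b d N : ℕ} (hN : 0 < N) (ha : Even a)
    (ha' : 2 ≤ a) (hb : Even b) (hb' : 2 ≤ b) (hd : 2 ≤ d)
    (h : (1 : ℚ) / a + 1 / b + 1 / d = 1 + 2 / N) :
    N ≤ 2 * a ∨ N ≤ 2 * b ∨ N ≤ 2 * d ∨ N = 24 ∧ (a = 4 ∨ b = 4) ∧ d = 3 := by
  wlog hab : a ≤ b generalizing a b
  · have := this hb hb' ha ha' (by rw [← h]; ring) (by lia)
    tauto
  have one_div_le {m n : ℕ} (hm : 0 < m) (hmn : m ≤ n) : (1 : ℚ) / n ≤ 1 / m := by gcongr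
  have hN' : (0 : ℚ) < 2 / N := by positivity
  have ha2 : a = 2 := by
    by_contra
    have ha4 : 4 ≤ a := by grind
    linarith [one_div_le four_pos ha4, one_div_le four_pos (ha4.trans hab), one_div_le two_pos hd]
  subst ha2
  by_cases hd2 : d = 2
  · subst hd2
    exact .inr (.inl <| le_two_mul_of_one_div_le_two_div (by lia) hN (by push_cast at h; linarith))
  by_cases hb2 : b = 2
  · subst hb2
    refine .inr (.inr (.inl <| le_two_mul_of_one_div_le_two_div (by lia) hN ?_))
    push_cast at h
    linarith
  have hd3 : d = 3 := by
    by_contra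
    linarith [one_div_le four_pos (show 4 ≤ b by grind), one_div_le four_pos (show 4 ≤ d by lia)]
  have hb4 : b = 4 := by
    by_contra
    linarith [one_div_le (show 0 < 6 by simp) (show 6 ≤ b by grind), one_div_le three_pos hd3.ge]
  subst hd3 hb4
  have hN24 : (N : ℚ) = 24 := by field_simp at h; push_cast at h; linarith
  exact .inr (.inr (.inr ⟨mod_cast hN24, .inr rfl, rfl⟩))

variable {ι : Type*} {s : Finset ι} {f : ι → ℕ}

theorem exists_sum_div_eq_average (hf : ∀ i ∈ s, f i = 1 ∨ f i = 2)
    (hsum : ∑ i ∈ s, (1 : ℚ) / f i = 1) :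
    ∃ a ∈ s, ∃ b ∈ s, ∀ g : ι → ℚ, ∑ i ∈ s, g i / f i = (g a + g b) / 2 := by
  classical
  have hcard : s.card • (1 / 2 : ℚ) ≤ ∑ i ∈ s, (1 : ℚ) / f i :=
    s.card_nsmul_le_sum _ _ fun i hi ↦ by obtain h | h := hf i hi <;> norm_num [h]
  have hle : s.card ≤ 2 := by
    rw [hsum, nsmul_eq_mul] at hcard
    exact_mod_cast (by linarith : (s.card : ℚ) ≤ 2)
  interval_cases hs : s.card
  · simp [Finset.card_eq_zero.1 hs] at hsum
  · obtain ⟨a, rfl⟩ := Finset.card_eq_one.1 hs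
    have ha : f a = 1 := by simpa using hsum
    exact ⟨a, by simp, a, by simp, fun g ↦ by simp [ha]⟩
  · obtain ⟨a, b, hab, rfl⟩ := Finset.card_eq_two.1 hs
    obtain ⟨ha, hb⟩ : f a = 2 ∧ f b = 2 := by
      rw [Finset.sum_pair hab] at hsum
      obtain ha | ha := hf a (by simp) <;> obtain hb | hb := hf b (by simp) <;>
        norm_num [ha, hb] at hsum
      exact ⟨ha, hb⟩
    exact ⟨a, by simp, b, by simp, fun g ↦ by rw [Finset.sum_pair hab, ha, hb]; push_cast; ring⟩

theorem eq_empty_or_eq_singleton_of_sum_lt_half {c : ι → ℕ} (hf : ∀ i ∈ s, f i = 1 ∨ f i = 2)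
    (hc : ∀ i ∈ s, 2 ≤ c i) (hsum : ∑ i ∈ s, (1 - 1 / c i : ℚ) / f i < 1 / 2) :
    s = ∅ ∨ ∃ d, s = {d} ∧ f d = 2 := by
  have hhalf {i} (hi : i ∈ s) : (1 / 2 : ℚ) ≤ 1 - 1 / c i := by
    have : (1 : ℚ) / c i ≤ 1 / 2 := by gcongr; exact_mod_cast hc i hi
    linarith
  have hcard : s.card • (1 / 4 : ℚ) ≤ ∑ i ∈ s, (1 - 1 / c i : ℚ) / f i :=
    s.card_nsmul_le_sum _ _ fun i hi ↦ by
      obtain h | h := hf i hi <;> · rw [h]; push_cast; linarith [hhalf hi]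
  have hle : s.card ≤ 1 := by
    rw [nsmul_eq_mul] at hcard
    have : (s.card : ℚ) < 2 := by linarith
    exact Nat.lt_succ_iff.1 (mod_cast this)
  interval_cases hs : s.card
  · exact .inl (Finset.card_eq_zero.1 hs)
  · obtain ⟨d, rfl⟩ := Finset.card_eq_one.1 hs
    refine .inr ⟨d, rfl, (hf d (by simp)).resolve_left fun hfd ↦ ?_⟩
    rw [Finset.sum_singleton, hfd] at hsum
    norm_num at hsum
    have := @hhalf d (by simp)
    norm_num at this
    linarith

theorem sum_one_sub_one_div_div (f : ι → ℕ) {e : ι → ℕ} (he : ∀ i ∈ s, e i = 1 ∨ e i = 2) :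
    ∑ i ∈ s, (1 - 1 / e i : ℚ) / f i = 1 / 2 * ∑ i ∈ s with e i = 2, (1 : ℚ) / f i := by
  rw [Finset.mul_sum, Finset.sum_filter]
  refine Finset.sum_congr rfl fun i hi ↦ ?_
  obtain h | h := he i hi
  · simp [h]
  · norm_num [h]
    ring

/-- In the application `s` indexes the conjugacy classes of tori of a finite subgroup of `PGL₂` of
order `N`; a torus `i` has order `c i` and index `f i` in its normalizer, and `e i` is the index in
it of its intersection with a fixed subgroup of index two. -/
theorem bound_or_octahedral_of_class_sums {c e : ι → ℕ} {N : ℕ} (hN : 0 < N)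
    (hf : ∀ i ∈ s, f i = 1 ∨ f i = 2) (hc : ∀ i ∈ s, 2 ≤ c i) (he : ∀ i ∈ s, e i = 1 ∨ e i = 2)
    (hec : ∀ i ∈ s, e i ∣ c i) (hsum : ∑ i ∈ s, (1 - 1 / c i : ℚ) / f i = 1 - 1 / N)
    (hsum' : ∑ i ∈ s, (1 - 1 / e i : ℚ) / f i = 1 / 2) :
    (∃ i ∈ s, N ≤ 2 * c i) ∨
      N = 24 ∧ (∃ i ∈ s, e i = 2 ∧ c i = 4) ∧ ∃ i ∈ s, c i = 3 ∧ f i = 2 := by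
  set s₂ := s.filter (e · = 2) with hs₂
  set s₁ := s.filter (¬ e · = 2) with hs₁
  rw [← Finset.sum_filter_add_sum_filter_not s (e · = 2), ← hs₂, ← hs₁] at hsum
  have hmem₂ {i} : i ∈ s₂ ↔ i ∈ s ∧ e i = 2 := Finset.mem_filter
  have hmem₁ {i} : i ∈ s₁ ↔ i ∈ s ∧ ¬e i = 2 := Finset.mem_filter
  have hone : ∑ i ∈ s₂, (1 : ℚ) / f i = 1 := by
    linarith [sum_one_sub_one_div_div f he]
  obtain ⟨a, ha, b, hb, hab⟩ := exists_sum_div_eq_average (fun i hi ↦ hf i (hmem₂.1 hi).1) hone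
  rw [hmem₂] at ha hb
  rw [hab] at hsum
  have heven {i} (hi : i ∈ s ∧ e i = 2) : Even (c i) :=
    even_iff_two_dvd.2 (hi.2 ▸ hec i hi.1)
  have hle {i} (hi : i ∈ s) : (1 : ℚ) / c i ≤ 1 / 2 := by gcongr; exact_mod_cast hc i hi
  have hNpos : (0 : ℚ) < 1 / N := by positivity
  have hrest : ∑ i ∈ s₁, (1 - 1 / c i : ℚ) / f i < 1 / 2 := by
    linarith [hle ha.1, hle hb.1]
  obtain hs | ⟨d, hs, hfd⟩ := eq_empty_or_eq_singleton_of_sum_lt_half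
    (fun i hi ↦ hf i (hmem₁.1 hi).1) (fun i hi ↦ hc i (hmem₁.1 hi).1) hrest
  · refine .inl ⟨a, ha.1, ?_⟩
    rw [hs, Finset.sum_empty] at hsum
    exact le_two_mul_of_one_div_le_two_div (by linarith [hc a ha.1]) hN
      (by linarith [show (0 : ℚ) ≤ 1 / c b by positivity, mul_one_div (2 : ℚ) N])
  · have hd : d ∈ s := (hmem₁.1 (hs ▸ Finset.mem_singleton_self d)).1
    rw [hs, Finset.sum_singleton, hfd] at hsum
    obtain h | h | h | ⟨hN, hab, hcd⟩ := bound_or_eq_of_one_div_add_one_div_add_one_div hN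
      (heven ha) (hc a ha.1) (heven hb) (hc b hb.1) (hc d hd)
      (by push_cast at hsum; linear_combination (-2) * hsum)
    · exact .inl ⟨a, ha.1, h⟩
    · exact .inl ⟨b, hb.1, h⟩
    · exact .inl ⟨d, hd, h⟩
    · refine .inr ⟨hN, ?_, d, hd, hcd, hfd⟩
      exact hab.elim (fun h ↦ ⟨a, ha.1, ha.2, h⟩) fun h ↦ ⟨b, hb.1, hb.2, h⟩

end ArithmeticOfIndices

section GroupTheory

open Subgroup

variable {G : Type*} [Group G]

theorem index_eq_one_or_two_of_mul_mem {H : Subgroup G}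
    (hH : ∀ a ∉ H, ∀ b ∉ H, a * b ∈ H) : H.index = 1 ∨ H.index = 2 := by
  rw [index_eq_one, or_iff_not_imp_left, index_eq_two_iff]
  intro hne
  obtain ⟨a, ha⟩ : ∃ a, a ∉ H := by simpa [Subgroup.ext_iff] using hne
  refine ⟨a, fun b ↦ ?_⟩
  by_cases hb : b ∈ H
  · exact .inr ⟨hb, fun h ↦ ha ((mul_mem_cancel_left hb).1 h)⟩
  · exact .inl ⟨hH b hb a ha, hb⟩

theorem relIndex_eq_one_or_two_of_mul_mem {H K : Subgroup G}
    (h : ∀ a ∈ K, a ∉ H → ∀ b ∈ K, b ∉ H → a * b ∈ H) :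
    H.relIndex K = 1 ∨ H.relIndex K = 2 :=
  index_eq_one_or_two_of_mul_mem fun a ha b hb ↦ h a a.2 ha b b.2 hb

theorem pow_relIndex_mem {Z H : Subgroup G} [Z.Normal] {g : G} (hg : g ∈ H) :
    g ^ Z.relIndex H ∈ Z :=
  pow_index_mem (Z.subgroupOf H) ⟨g, hg⟩

theorem mem_centralizer_singleton_iff_commute {x y : G} :
    y ∈ centralizer {x} ↔ Commute x y := by
  rw [mem_centralizer_singleton_iff, eq_comm]
  rfl

theorem conj_mem_iff_of_normal {Z : Subgroup G} (hZ : Z.Normal) {x : G} (k : G) :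
    k * x * k⁻¹ ∈ Z ↔ x ∈ Z := by
  rw [hZ.mem_comm_iff, inv_mul_cancel_left]

theorem card_mul_relIndex {H K : Subgroup G} (h : H ≤ K) :
    Nat.card H * H.relIndex K = Nat.card K := by
  rw [← relIndex_bot_left, ← relIndex_bot_left, relIndex_mul_relIndex _ _ _ bot_le h]

theorem two_le_relIndex_of_not_le [Finite G] {H K : Subgroup G} (h : ¬H ≤ K) :
    2 ≤ K.relIndex H := by
  have h0 : K.relIndex H ≠ 0 := index_ne_zero_of_finite
  have h1 : K.relIndex H ≠ 1 := relIndex_eq_one.not.2 h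
  lia

theorem ncard_sdiff_div_card_eq [Finite G] (H K : Subgroup G) :
    ((H \ K : Set G).ncard / Nat.card H : ℚ) = 1 - 1 / K.relIndex H := by
  have hindex : Nat.card (H ⊓ K : Subgroup G) * K.relIndex H = Nat.card H := by
    rw [← inf_relIndex_left H K, card_mul_relIndex inf_le_left]
  have hcard : Nat.card (H ⊓ K : Subgroup G) + (H \ K : Set G).ncard = Nat.card H :=
    Set.ncard_inter_add_ncard_sdiff_eq_ncard (H : Set G) K
  have hH : (Nat.card H : ℚ) ≠ 0 := by exact_mod_cast Nat.card_pos.ne'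
  have hK : (K.relIndex H : ℚ) ≠ 0 := by exact_mod_cast index_ne_zero_of_finite
  field_simp
  qify at hindex hcard
  linear_combination (K.relIndex H : ℚ) * hcard - hindex

/-- In `PGL₂` of a field, tori are centralizers of noncentral semisimple elements: they are
commutative, they meet pairwise in the center, and the elements of the normalizer lying outside the
torus form at most one coset. This structure records these properties for all centralizers of
elements outside a central subgroup `Z` of an abstract group. -/
structure HasToralCentralizers (Z : Subgroup G) : Prop where
  le_center : Z ≤ center G
  commute_of_commute : ∀ {x y z : G}, x ∉ Z → Commute x y → Commute x z → Commute y z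
  mul_mem_centralizer : ∀ {x a b : G}, x ∉ Z →
    a ∈ normalizer (centralizer {x} : Set G) → a ∉ centralizer {x} →
    b ∈ normalizer (centralizer {x} : Set G) → b ∉ centralizer {x} → a * b ∈ centralizer {x}

namespace HasToralCentralizers

variable {Z : Subgroup G} {x y z k : G}

theorem normal (hZ : HasToralCentralizers Z) : Z.Normal :=
  ⟨fun z hz k ↦ by rwa [mem_center_iff.1 (hZ.le_center hz) k, mul_inv_cancel_right]⟩

theorem le_centralizer (hZ : HasToralCentralizers Z) (s : Set G) : Z ≤ centralizer s :=
  hZ.le_center.trans (center_le_centralizer s)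

theorem centralizer_eq (hZ : HasToralCentralizers Z) (hx : x ∉ Z) (hy : y ∉ Z)
    (hxy : Commute x y) : centralizer {x} = centralizer {y} := by
  ext w
  simp only [mem_centralizer_singleton_iff_commute]
  exact ⟨hZ.commute_of_commute hx hxy, hZ.commute_of_commute hy hxy.symm⟩

theorem mem_normalizer_centralizer_iff (hZ : HasToralCentralizers Z) (hx : x ∉ Z) :
    k ∈ normalizer (centralizer {x} : Set G) ↔ Commute x (k * x * k⁻¹) := by
  rw [mem_normalizer_iff]
  refine ⟨fun h ↦ ?_, fun h w ↦ ?_⟩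
  · rw [← mem_centralizer_singleton_iff_commute, ← h, mem_centralizer_singleton_iff]
  · have heq := hZ.centralizer_eq hx (by rwa [conj_mem_iff_of_normal hZ.normal]) h
    rw [mem_centralizer_singleton_iff_commute, heq, mem_centralizer_singleton_iff_commute,
      Commute.conj_iff]

theorem commute_of_pow_three_mem (hZ : HasToralCentralizers Z) (hy : y ∉ Z) (hx : x ^ 3 ∈ Z)
    (hxy : x ∈ normalizer (centralizer {y} : Set G)) : Commute y x := by
  rw [← mem_centralizer_singleton_iff_commute]
  by_contra hxc
  have hsq : x * x ∈ centralizer {y} := hZ.mul_mem_centralizer hy hxy hxc hxy hxc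
  refine hxc ((mul_mem_cancel_left hsq).1 ?_)
  rw [← pow_three']
  exact hZ.le_centralizer _ hx

theorem relIndex_centralizer_normalizer (hZ : HasToralCentralizers Z) (hx : x ∉ Z) :
    (centralizer {x}).relIndex (normalizer (centralizer {x} : Set G)) = 1 ∨
      (centralizer {x}).relIndex (normalizer (centralizer {x} : Set G)) = 2 :=
  relIndex_eq_one_or_two_of_mul_mem fun _ ha ha' _ hb hb' ↦
    hZ.mul_mem_centralizer hx ha ha' hb hb'

/-- Two elements outside `Z` are related when their centralizers are conjugate, so the classes are
the conjugacy classes of tori. -/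
def toralSetoid (hZ : HasToralCentralizers Z) : Setoid {x // x ∉ Z} where
  r x y := ∃ k : G, Commute (k * x * k⁻¹) y
  iseqv :=
    { refl := fun x ↦ ⟨1, by simp⟩
      symm := fun {x y} ⟨k, hk⟩ ↦ ⟨k⁻¹, by
        rw [← Commute.conj_iff k]; simpa [mul_assoc] using hk.symm⟩
      trans := fun {x y z} ⟨k, hk⟩ ⟨m, hm⟩ ↦ ⟨m * k, hZ.commute_of_commute
        (x := m * y * m⁻¹) (by rw [conj_mem_iff_of_normal hZ.normal]; exact y.2) (by
          have := (Commute.conj_iff m).2 hk.symm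
          simpa [mul_assoc] using this) hm⟩ }

theorem setOf_commute_conj_eq (hZ : HasToralCentralizers Z) (hx : x ∉ Z) (hy : y ∉ Z)
    (hk : Commute (k * x * k⁻¹) y) :
    {m : G | Commute x (m⁻¹ * y * m)} = (k * ·) '' (normalizer (centralizer {x} : Set G)) := by
  have hky : Commute x (k⁻¹ * y * k) := by
    rw [← Commute.conj_iff k]
    simpa [mul_assoc] using hk
  have hky' : k⁻¹ * y * k ∉ Z := by
    simpa using (conj_mem_iff_of_normal hZ.normal (x := y) k⁻¹).not.2 hy
  ext m
  rw [Set.image_mul_left, Set.mem_preimage, SetLike.mem_coe, ← inv_mem_iff,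
    hZ.centralizer_eq hx hky' hky, hZ.mem_normalizer_centralizer_iff hky', Set.mem_ofPred_eq]
  simp only [_root_.mul_inv_rev, inv_inv]
  rw [show m⁻¹ * k * (k⁻¹ * y * k) * (k⁻¹ * m) = m⁻¹ * y * m by group]
  exact ⟨fun h ↦ hZ.commute_of_commute hx hky h, fun h ↦ hZ.commute_of_commute hky' hky.symm h⟩

theorem ncard_conj_mul_card_normalizer [Finite G] (hZ : HasToralCentralizers Z) (hx : x ∉ Z)
    {Q : Set G} (hQ : ∀ k, ∀ q ∈ Q, k * q * k⁻¹ ∈ Q) (hQZ : ∀ q ∈ Q, q ∉ Z) :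
    {q ∈ Q | ∃ k, Commute (k * x * k⁻¹) q}.ncard * Nat.card (normalizer (centralizer {x} : Set G))
      = Nat.card G * (Q ∩ centralizer {x}).ncard := by
  classical
  have := Fintype.ofFinite G
  have hcount := Finset.card_mul_eq_card_mul (s := Finset.univ)
    (t := {q | q ∈ Q ∧ ∃ k, Commute (k * x * k⁻¹) q}) (fun k q ↦ Commute x (k⁻¹ * q * k))
    (m := (Q ∩ centralizer {x}).ncard)
    (n := Nat.card (normalizer (centralizer {x} : Set G))) (fun k _ ↦ ?_) (fun q hq ↦ ?_)
  · simpa [← Set.ncard_coe_finset, eq_comm] using hcount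
  · rw [← Set.ncard_coe_finset, ← Set.ncard_image_of_injective (Q ∩ _) (MulAut.conj k).injective]
    congr
    ext q
    rw [Finset.coe_bipartiteAbove]
    simp only [Set.mem_ofPred_eq, Finset.mem_filter_univ, Set.mem_image, MulAut.conj_apply]
    constructor
    · rintro ⟨⟨hq, -⟩, hc⟩
      exact ⟨k⁻¹ * q * k, ⟨by simpa only [inv_inv] using hQ k⁻¹ q hq,
        mem_centralizer_singleton_iff_commute.2 hc⟩, by simp [mul_assoc]⟩
    · rintro ⟨a, ⟨ha, hc⟩, rfl⟩
      have hc := mem_centralizer_singleton_iff_commute.1 hc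
      exact ⟨⟨hQ k a ha, k, (Commute.conj_iff k).2 hc⟩, by simpa [mul_assoc] using hc⟩
  · simp only [Finset.mem_filter, Finset.mem_univ, true_and] at hq
    obtain ⟨hqQ, k, hk⟩ := hq
    rw [← Set.ncard_coe_finset, Finset.coe_bipartiteBelow]
    simp only [Finset.mem_univ, true_and]
    rw [hZ.setOf_commute_conj_eq hx (hQZ q hqQ) hk,
      Set.ncard_image_of_injective _ (mul_right_injective k)]
    rfl

theorem exists_toral_transversal [Finite G] (hZ : HasToralCentralizers Z) :
    ∃ R : Finset G, (∀ t ∈ R, t ∉ Z) ∧ ∀ x ∉ Z, ∃! t, t ∈ R ∧ ∃ k, Commute (k * t * k⁻¹) x := by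
  classical
  have := Fintype.ofFinite (Quotient hZ.toralSetoid)
  refine ⟨Finset.univ.image fun q : Quotient hZ.toralSetoid ↦ (q.out : G), ?_, fun x hx ↦ ?_⟩
  · simp only [Finset.mem_image, Finset.mem_univ, true_and, forall_exists_index,
      forall_apply_eq_imp_iff]
    exact fun q ↦ q.out.2
  · let r : {x // x ∉ Z} := (Quotient.mk hZ.toralSetoid ⟨x, hx⟩).out
    have hout : ∃ k : G, Commute (k * r * k⁻¹) x :=
      Quotient.mk_out (s := hZ.toralSetoid) ⟨x, hx⟩
    refine ⟨_, ⟨Finset.mem_image_of_mem _ (Finset.mem_univ _), hout⟩, ?_⟩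
    simp only [Finset.mem_image, Finset.mem_univ, true_and]
    rintro _ ⟨⟨q, rfl⟩, hq⟩
    rw [← Quotient.out_eq q, Quotient.sound (s := hZ.toralSetoid) (b := ⟨x, hx⟩) hq]

theorem sum_ncard_conj_eq_ncard [Finite G] {R : Finset G} {Q : Set G}
    (hR : ∀ q ∈ Q, ∃! t, t ∈ R ∧ ∃ k, Commute (k * t * k⁻¹) q) :
    ∑ t ∈ R, {q ∈ Q | ∃ k, Commute (k * t * k⁻¹) q}.ncard = Q.ncard := by
  classical
  have := Fintype.ofFinite G
  have hsum := Finset.sum_card_bipartiteAbove_eq_sum_card_bipartiteBelow (s := R) (t := Q.toFinset)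
    fun t q ↦ ∃ k, Commute (k * t * k⁻¹) q
  have hone q (hq : q ∈ Q.toFinset) :
      (R.bipartiteBelow (fun t q ↦ ∃ k, Commute (k * t * k⁻¹) q) q).card = 1 := by
    obtain ⟨t, ht, huniq⟩ := hR q (by simpa using hq)
    refine Finset.card_eq_one.2 ⟨t, ?_⟩
    ext u
    rw [Finset.mem_bipartiteBelow, Finset.mem_singleton]
    exact ⟨huniq u, fun h ↦ h ▸ ht⟩
  rw [Finset.sum_congr rfl hone] at hsum
  simpa [← Set.ncard_coe_finset] using hsum

theorem exists_sum_one_sub_one_div_relIndex_eq [Finite G] (hZ : HasToralCentralizers Z) :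
    ∃ R : Finset G, (∀ t ∈ R, t ∉ Z) ∧ ∀ K : Subgroup G, K.Normal → Z ≤ K →
      ∑ t ∈ R, (1 - 1 / K.relIndex (centralizer {t}) : ℚ) /
        (centralizer {t}).relIndex (normalizer (centralizer {t} : Set G)) = 1 - 1 / K.index := by
  obtain ⟨R, hR, huniq⟩ := hZ.exists_toral_transversal
  refine ⟨R, hR, fun K hK hZK ↦ ?_⟩
  have hKZ : ∀ q ∈ (K : Set G)ᶜ, q ∉ Z := fun q hq hqZ ↦ hq (hZK hqZ)
  have hsum := ncard_sdiff_div_card_eq ⊤ K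
  rw [relIndex_top_right, card_top, coe_top, ← Set.compl_eq_univ_sdiff,
    ← sum_ncard_conj_eq_ncard fun q hq ↦ huniq q (hKZ q hq), Nat.cast_sum, Finset.sum_div] at hsum
  rw [← hsum]
  refine Finset.sum_congr rfl fun t ht ↦ ?_
  have hcount := hZ.ncard_conj_mul_card_normalizer (hR t ht) (Q := (K : Set G)ᶜ)
    (fun k q hq ↦ (conj_mem_iff_of_normal hK k).not.2 hq) hKZ
  have hG : (Nat.card G : ℚ) ≠ 0 := by exact_mod_cast Nat.card_pos.ne'
  have hN : (Nat.card (normalizer (centralizer {t} : Set G)) : ℚ) ≠ 0 := by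
    exact_mod_cast Nat.card_pos.ne'
  rw [← ncard_sdiff_div_card_eq, div_div, Set.sdiff_eq, Set.inter_comm, ← Nat.cast_mul,
    card_mul_relIndex le_normalizer, div_eq_div_iff hN hG, ← Nat.cast_mul, ← Nat.cast_mul, hcount,
    mul_comm]

variable {K : Subgroup G}

theorem exists_index_centralizer_le_two_or [Finite G] (hZ : HasToralCentralizers Z)
    (hK : K.index = 2) (hZK : Z ≤ K) :
    (∃ x ∉ Z, (centralizer {x}).index ≤ 2) ∨
      Z.index = 24 ∧ (∃ b ∉ K, Z.relIndex (centralizer {b}) = 4) ∧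
        ∃ d ∉ Z, Z.relIndex (centralizer {d}) = 3 ∧
          (normalizer (centralizer {d} : Set G)).index = 4 := by
  have hKn : K.Normal := normal_of_index_eq_two hK
  obtain ⟨R, hR, hsum⟩ := hZ.exists_sum_one_sub_one_div_relIndex_eq
  have hself (x : G) : x ∈ centralizer {x} :=
    mem_centralizer_singleton_iff_commute.2 (Commute.refl x)
  have hindex (x : G) : Z.relIndex (centralizer {x}) * (centralizer {x}).index = Z.index :=
    relIndex_mul_index (hZ.le_centralizer _)
  have hdichotomy := bound_or_octahedral_of_class_sums (s := R) (N := Z.index)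
    (Nat.pos_of_ne_zero index_ne_zero_of_finite)
    (fun t ht ↦ hZ.relIndex_centralizer_normalizer (hR t ht))
    (fun t ht ↦ two_le_relIndex_of_not_le fun h ↦ hR t ht (h (hself t)))
    (fun t _ ↦ (Nat.dvd_prime Nat.prime_two).1 (hK ▸ relIndex_dvd_index_of_normal K _))
    (fun t _ ↦ relIndex_dvd_of_le_left _ hZK) (hsum Z hZ.normal le_rfl)
    ((hsum K hKn hZK).trans (by norm_num [hK]))
  obtain ⟨t, ht, hle⟩ | ⟨hN, ⟨t, ht, het, hct⟩, d, hd, hcd, hfd⟩ := hdichotomy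
  · refine .inl ⟨t, hR t ht, ?_⟩
    rw [← hindex t, mul_comm 2] at hle
    exact Nat.le_of_mul_le_mul_left hle (Nat.pos_of_ne_zero index_ne_zero_of_finite)
  · refine .inr ⟨hN, ?_, d, hR d hd, hcd, ?_⟩
    · obtain ⟨b, hbt, hbK⟩ := SetLike.not_le_iff_exists.1 fun h : centralizer {t} ≤ K ↦ by
        simp [relIndex_eq_one.2 h] at het
      have heq := hZ.centralizer_eq (hR t ht) (fun h ↦ hbK (hZK h))
        (mem_centralizer_singleton_iff_commute.1 hbt)
      exact ⟨b, hbK, heq ▸ hct⟩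
    · have hnormalizer := relIndex_mul_index (le_normalizer (H := centralizer {d}))
      have hcentralizer := hindex d
      rw [hfd] at hnormalizer
      rw [hcd, hN] at hcentralizer
      lia

theorem mem_of_mem_normalCore_normalizer (hZ : HasToralCentralizers Z) (hx : x ∉ Z)
    (htop : normalizer (centralizer {x} : Set G) ≠ ⊤)
    (hk : k ∈ (normalizer (centralizer {x} : Set G)).normalCore) (hk3 : k ^ 3 ∈ Z)
    (hxk : Commute x k) : k ∈ Z := by
  by_contra hkZ
  obtain ⟨j, hj⟩ : ∃ j, j ∉ normalizer (centralizer {x} : Set G) := by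
    simpa [Subgroup.ext_iff] using htop
  have hjx : j * x * j⁻¹ ∉ Z := (conj_mem_iff_of_normal hZ.normal j).not.2 hx
  have hkj : k ∈ normalizer (centralizer {j * x * j⁻¹} : Set G) := by
    have hconj := hk j⁻¹
    rw [hZ.mem_normalizer_centralizer_iff hx, ← Commute.conj_iff j] at hconj
    rw [hZ.mem_normalizer_centralizer_iff hjx]
    simpa [mul_assoc] using hconj
  refine hj ((hZ.mem_normalizer_centralizer_iff hx).2 ?_)
  exact hZ.commute_of_commute hkZ hxk.symm (hZ.commute_of_pow_three_mem hjx hk3 hkj).symm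

theorem normalCore_normalizer_centralizer_eq (hZ : HasToralCentralizers Z) (hx : x ∉ Z)
    (hcard : Z.relIndex (centralizer {x}) = 3)
    (htop : normalizer (centralizer {x} : Set G) ≠ ⊤) :
    (normalizer (centralizer {x} : Set G)).normalCore = Z := by
  have hZn := hZ.normal
  have hinter {w : G} (hw : w ∈ (normalizer (centralizer {x} : Set G)).normalCore)
      (hxw : Commute x w) : w ∈ Z := by
    refine hZ.mem_of_mem_normalCore_normalizer hx htop hw ?_ hxw
    exact hcard ▸ pow_relIndex_mem (mem_centralizer_singleton_iff_commute.2 hxw)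
  refine le_antisymm (fun k hk ↦ ?_) fun z hz g ↦
    le_normalizer (hZ.le_centralizer _ (hZn.conj_mem z hz g))
  have hcomm : k * x * k⁻¹ * x⁻¹ ∈ Z := by
    refine hinter ?_ (.mul_right ?_ (Commute.refl x).inv_right)
    · rw [mul_assoc, mul_assoc, ← mul_assoc x]
      exact mul_mem hk (Normal.conj_mem inferInstance _ (inv_mem hk) x)
    · exact (hZ.mem_normalizer_centralizer_iff hx).1 (normalCore_le _ hk)
  by_contra hkZ
  refine hkZ (hinter hk (hZ.commute_of_pow_three_mem hkZ ?_ ?_).symm)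
  · exact hcard ▸ pow_relIndex_mem (mem_centralizer_singleton_iff_commute.2 (Commute.refl x))
  · rw [hZ.mem_normalizer_centralizer_iff hkZ,
      show x * k * x⁻¹ = (k * x * k⁻¹ * x⁻¹)⁻¹ * k by group]
    refine .mul_right ?_ (Commute.refl k)
    exact mem_center_iff.1 (hZ.le_center (inv_mem hcomm)) k

theorem exists_surjective_perm_ker_eq [Finite G] (hZ : HasToralCentralizers Z)
    (hN : Z.index = 24) (hx : x ∉ Z) (hcard : Z.relIndex (centralizer {x}) = 3)
    (hindex : (normalizer (centralizer {x} : Set G)).index = 4) :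
    ∃ φ : G →* Equiv.Perm (Fin 4), Function.Surjective φ ∧ φ.ker = Z := by
  let e : G ⧸ normalizer (centralizer {x} : Set G) ≃ Fin 4 := Finite.equivFinOfCardEq hindex
  let φ : G →* Equiv.Perm (Fin 4) := e.permCongrHom.toMonoidHom.comp (MulAction.toPermHom G _)
  have hker : φ.ker = Z := by
    rw [MonoidHom.ker_comp_of_injective _ _ e.permCongrHom.injective, ← normalCore_eq_ker]
    exact hZ.normalCore_normalizer_centralizer_eq hx hcard fun h ↦ by simp [h] at hindex
  refine ⟨φ, MonoidHom.range_eq_top.1 (eq_top_of_card_eq _ ?_), hker⟩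
  rw [← index_ker, hker, hN, Nat.card_perm, Nat.card_fin]
  rfl

theorem exists_pow_four_mem (hZ : HasToralCentralizers Z) (hK : K.index = 2)
    (hsq : ∀ {x y : G}, x ∉ Z → y ∉ Z → Commute x y → x ^ 2 ∈ Z → y ^ 2 ∈ Z → x * y ∈ Z)
    (hZK : Z ≤ K) (hx : x ∉ K) (hcard : Z.relIndex (centralizer {x}) = 4) :
    ∃ g ∉ K, g ^ 2 ∉ Z ∧ g ^ 4 ∈ Z := by
  have hZn := hZ.normal
  have hKn : K.Normal := normal_of_index_eq_two hK
  have hpow {w : G} (hw : w ∈ centralizer {x}) : w ^ 4 ∈ Z := hcard ▸ pow_relIndex_mem hw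
  have hxx : x ∈ centralizer {x} := mem_centralizer_singleton_iff_commute.2 (Commute.refl x)
  by_cases hx2 : x ^ 2 ∈ Z
  · obtain ⟨h, hh, hhZ⟩ : ∃ h ∈ K ⊓ centralizer {x}, h ∉ Z := by
      refine SetLike.not_le_iff_exists.1 fun hle ↦ ?_
      have hdvd := relIndex_dvd_of_le_left (centralizer {x}) hle
      rw [inf_relIndex_right, hcard] at hdvd
      exact absurd (hdvd.trans (hK ▸ relIndex_dvd_index_of_normal K _)) (by decide)
    obtain ⟨hhK, hhx⟩ := mem_inf.1 hh
    have hxhK : x * h ∉ K := (mul_mem_cancel_right hhK).not.2 hx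
    refine ⟨x * h, hxhK, fun hxh2 ↦ hhZ ?_, hpow (mul_mem hxx hhx)⟩
    have hmul := hsq (fun h ↦ hx (hZK h)) (fun h ↦ hxhK (hZK h))
      (.mul_right (.refl x) (mem_centralizer_singleton_iff_commute.1 hhx)) hx2 hxh2
    rwa [← mul_assoc, ← sq, mul_mem_cancel_left hx2] at hmul
  · exact ⟨x, hx, hx2, hpow hxx⟩

end HasToralCentralizers

theorem nonempty_map_mk_mulEquiv_of_ker_eq {N : Subgroup G} [N.Normal] {H : Subgroup G} {P : Type*}
    [Group P] {φ : H →* P} (hφ : Function.Surjective φ) (hker : φ.ker = N.subgroupOf H) :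
    Nonempty (H.map (QuotientGroup.mk' N) ≃* P) := by
  have hker' : ((QuotientGroup.mk' N).subgroupMap H).ker = φ.ker := by
    rw [ker_subgroupMap, QuotientGroup.ker_mk', hker]
  exact ⟨(QuotientGroup.quotientKerEquivOfSurjective _
      ((QuotientGroup.mk' N).subgroupMap_surjective H)).symm.trans <|
    (QuotientGroup.quotientMulEquivOfEq hker').trans <|
      QuotientGroup.quotientKerEquivOfSurjective φ hφ⟩

end GroupTheory

section CentralizerUpToSign

variable {R : Type*} [Ring R] {a : R} {u v : Rˣ}

/-- The units `u` with `u * a = a * u` or `u * a = -(a * u)`. If `a` is a trace-zero generator of a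
nonsplit torus of `GL₂`, this is the normalizer of that torus. -/
def centralizerUpToSign (a : R) : Subgroup Rˣ where
  carrier := {u | SemiconjBy (u : R) a a ∨ SemiconjBy (u : R) a (-a)}
  one_mem' := .inl (.one_left a)
  mul_mem' := by
    rintro u v (hu | hu) (hv | hv)
    · exact .inl (hu.mul_left hv)
    · exact .inr (hu.neg_right.mul_left hv)
    · exact .inr (hu.mul_left hv)
    · exact .inl (SemiconjBy.mul_left (by simpa using hu.neg_right) hv)
  inv_mem' := by
    rintro u (hu | hu)
    · exact .inl hu.units_inv_symm_left
    · have hu' : SemiconjBy (u : R) (-a) a := by simpa using hu.neg_right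
      exact .inr hu'.units_inv_symm_left

theorem mem_centralizerUpToSign_iff :
    u ∈ centralizerUpToSign a ↔ SemiconjBy (u : R) a a ∨ SemiconjBy (u : R) a (-a) :=
  Iff.rfl

theorem commute_mul_of_mem_centralizerUpToSign (hu : u ∈ centralizerUpToSign a)
    (hv : v ∈ centralizerUpToSign a) (hua : ¬Commute (u : R) a) (hva : ¬Commute (v : R) a) :
    Commute (u * v : R) a :=
  SemiconjBy.mul_left (by simpa using (hu.resolve_left hua).neg_right) (hv.resolve_left hva)

theorem conj_mem_centralizerUpToSign_iff {b : R} (g : Rˣ) (hg : SemiconjBy (g : R) a b) :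
    g * u * g⁻¹ ∈ centralizerUpToSign b ↔ u ∈ centralizerUpToSign a := by
  have hsemi {a' b' : R} (h : SemiconjBy (g : R) a' b') :
      SemiconjBy (↑(g * u * g⁻¹) : R) b b' ↔ SemiconjBy (u : R) a a' := by
    refine ⟨fun hu ↦ ?_, fun hu ↦ ?_⟩
    · simpa [mul_assoc] using (h.units_inv_symm_left.mul_left hu).mul_left hg
    · simpa using (h.mul_left hu).mul_left hg.units_inv_symm_left
  rw [mem_centralizerUpToSign_iff, hsemi hg, hsemi hg.neg_right, mem_centralizerUpToSign_iff]

theorem centralizerUpToSign_smul {K : Type*} [Field K] [Algebra K R] {c : K} (hc : c ≠ 0) (a : R) :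
    centralizerUpToSign (c • a) = centralizerUpToSign a := by
  ext u
  simp only [mem_centralizerUpToSign_iff, SemiconjBy, mul_smul_comm, smul_mul_assoc, ← smul_neg,
    (smul_right_injective R hc).eq_iff]

end CentralizerUpToSign

section TracelessPart

variable {F : Type*} [Field F] {A B V W : Matrix (Fin 2) (Fin 2) F}

/-- The trace-zero summand of a `2 × 2` matrix in characteristic other than two. It has the same
centralizer as the matrix, and its square is scalar. -/
def tracelessPart (A : Matrix (Fin 2) (Fin 2) F) : Matrix (Fin 2) (Fin 2) F :=
  A - Matrix.scalar (Fin 2) (A.trace / 2)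

theorem mem_range_scalar_fin_two_iff :
    A ∈ Set.range (Matrix.scalar (Fin 2)) ↔ A 0 1 = 0 ∧ A 1 0 = 0 ∧ A 0 0 = A 1 1 := by
  refine ⟨?_, fun ⟨h01, h10, hdiag⟩ ↦ ⟨A 0 0, ?_⟩⟩
  · rintro ⟨c, rfl⟩
    simp
  · ext i j
    fin_cases i <;> fin_cases j <;> simp [h01, h10, hdiag]

theorem commute_tracelessPart_left_iff : Commute (tracelessPart A) B ↔ Commute A B := by
  have hscalar : Commute (Matrix.scalar (Fin 2) (A.trace / 2)) B :=
    Matrix.scalar_commute _ (Commute.all _) _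
  refine ⟨fun h ↦ ?_, fun h ↦ h.sub_left hscalar⟩
  simpa [tracelessPart] using h.add_left hscalar

theorem commute_tracelessPart_right_iff : Commute B (tracelessPart A) ↔ Commute B A := by
  rw [Commute.symm_iff, commute_tracelessPart_left_iff, Commute.symm_iff]

theorem tracelessPart_conj (g : GL (Fin 2) F) (A : Matrix (Fin 2) (Fin 2) F) :
    tracelessPart (g.val * A * g.val⁻¹) = g.val * tracelessPart A * g.val⁻¹ := by
  have hscalar : g.val * Matrix.scalar (Fin 2) (A.trace / 2) * g.val⁻¹ =
      Matrix.scalar (Fin 2) (A.trace / 2) := by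
    rw [← (Matrix.scalar_commute _ (Commute.all _) g.val).eq, mul_assoc, ← Matrix.coe_units_inv,
      Units.mul_inv, mul_one]
  rw [tracelessPart, tracelessPart, mul_sub, sub_mul, hscalar, ← Matrix.coe_units_inv,
    Matrix.trace_units_conj]

theorem tracelessPart_of_trace_eq_zero (hA : A.trace = 0) : tracelessPart A = A := by
  simp [tracelessPart, hA]

theorem discr_fin_two_of_trace_eq_zero (hA : A.trace = 0) : A.discr = -4 * A.det := by
  rw [Matrix.discr_fin_two, hA]
  ring

theorem tracelessPart_ne_zero (hA : A ∉ Set.range (Matrix.scalar (Fin 2))) :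
    tracelessPart A ≠ 0 :=
  fun h ↦ hA ⟨_, (sub_eq_zero.1 h).symm⟩

variable [NeZero (2 : F)]

theorem four_ne_zero_of_two_ne_zero : (4 : F) ≠ 0 := by
  rw [show (4 : F) = 2 ^ 2 by norm_num]
  exact pow_ne_zero 2 two_ne_zero

theorem trace_tracelessPart (A : Matrix (Fin 2) (Fin 2) F) : (tracelessPart A).trace = 0 := by
  simp only [tracelessPart, Matrix.trace_fin_two, Matrix.sub_apply, Matrix.scalar_apply,
    Matrix.diagonal_apply_eq]
  field_simp
  ring

theorem tracelessPart_sq (A : Matrix (Fin 2) (Fin 2) F) :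
    tracelessPart A ^ 2 = Matrix.scalar (Fin 2) (A.discr / 4) :=
  Matrix.sub_scalar_sq_eq_discr

theorem mul_apply_eq_mul_apply_of_commute (hV : V.trace = 0) (hW : W.trace = 0)
    (hVW : Commute V W) (i j k l : Fin 2) : V i j * W k l = W i j * V k l := by
  have hV' : V 1 1 = -V 0 0 := by linear_combination hV - V.trace_fin_two
  have hW' : W 1 1 = -W 0 0 := by linear_combination hW - W.trace_fin_two
  have hentry (i j : Fin 2) := congr_fun₂ hVW.eq i j
  simp only [Matrix.mul_apply, Fin.sum_univ_two] at hentry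
  have h₁ : V 0 1 * W 1 0 = W 0 1 * V 1 0 := by linear_combination hentry 0 0
  have h₂ : V 0 0 * W 0 1 = W 0 0 * V 0 1 :=
    mul_left_cancel₀ (two_ne_zero (α := F)) (by grind)
  have h₃ : V 0 0 * W 1 0 = W 0 0 * V 1 0 :=
    mul_left_cancel₀ (two_ne_zero (α := F)) (by grind)
  fin_cases i <;> fin_cases j <;> fin_cases k <;> fin_cases l <;> grind

theorem exists_eq_smul_of_commute (hV : V ≠ 0) (hVtr : V.trace = 0)
    (hWtr : W.trace = 0) (hVW : Commute V W) : ∃ c : F, W = c • V := by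
  obtain ⟨i, j, hij⟩ : ∃ i j, V i j ≠ 0 := by
    by_contra! h
    exact hV (Matrix.ext h)
  refine ⟨W i j / V i j, Matrix.ext fun k l ↦ ?_⟩
  rw [Matrix.smul_apply, smul_eq_mul, div_mul_eq_mul_div, eq_div_iff hij, mul_comm,
    mul_apply_eq_mul_apply_of_commute hVtr hWtr hVW]

theorem commute_of_commute_of_notMem_range_scalar (hA : A ∉ Set.range (Matrix.scalar (Fin 2)))
    (hAV : Commute A V) (hAW : Commute A W) : Commute V W := by
  have hsmul {B : Matrix (Fin 2) (Fin 2) F} (hAB : Commute A B) :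
      ∃ c : F, tracelessPart B = c • tracelessPart A :=
    exists_eq_smul_of_commute (tracelessPart_ne_zero hA) (trace_tracelessPart A)
      (trace_tracelessPart B)
      (commute_tracelessPart_left_iff.2 (commute_tracelessPart_right_iff.2 hAB))
  obtain ⟨c, hc⟩ := hsmul hAV
  obtain ⟨d, hd⟩ := hsmul hAW
  rw [← commute_tracelessPart_left_iff, ← commute_tracelessPart_right_iff, hc, hd]
  exact (Commute.refl _).smul_left c |>.smul_right d

theorem mul_mem_range_scalar_of_commute (hAtr : A.trace = 0) (hBtr : B.trace = 0)
    (hAB : Commute A B) : A * B ∈ Set.range (Matrix.scalar (Fin 2)) := by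
  obtain rfl | hA := eq_or_ne A 0
  · exact ⟨0, by simp⟩
  obtain ⟨c, rfl⟩ := exists_eq_smul_of_commute hA hAtr hBtr hAB
  have hsq := tracelessPart_sq A
  rw [tracelessPart_of_trace_eq_zero hAtr] at hsq
  refine ⟨c * (A.discr / 4), ?_⟩
  rw [mul_smul_comm, ← sq, hsq]
  ext i j
  simp [Matrix.scalar_apply, Matrix.diagonal_apply]

theorem eq_or_eq_neg_of_commute_of_sq_eq (hVtr : V.trace = 0) (hWtr : W.trace = 0)
    (hVW : Commute V W) (hsq : W ^ 2 = V ^ 2) (hV : V ^ 2 ≠ 0) : W = V ∨ W = -V := by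
  obtain ⟨b, rfl⟩ := exists_eq_smul_of_commute (ne_zero_pow two_ne_zero hV) hVtr hWtr hVW
  have hb : b ^ 2 = 1 := smul_left_injective F hV (by simpa [smul_pow] using hsq)
  obtain rfl | rfl := sq_eq_one_iff.1 hb
  · exact .inl (one_smul _ _)
  · simp

theorem mem_centralizerUpToSign_tracelessPart (hA : A.discr ≠ 0) {g : GL (Fin 2) F}
    (hg : Commute A (g.val * A * g.val⁻¹)) : g ∈ centralizerUpToSign (tracelessPart A) := by
  set B := g.val * A * g.val⁻¹ with hB
  have hsemi : SemiconjBy g.val (tracelessPart A) (tracelessPart B) := by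
    rw [hB, tracelessPart_conj, ← Matrix.coe_units_inv]
    exact g.mk_semiconjBy _
  have hsq : tracelessPart B ^ 2 = tracelessPart A ^ 2 := by
    rw [tracelessPart_sq, tracelessPart_sq, hB, Matrix.discr_conj]
  have hA_sq : tracelessPart A ^ 2 ≠ 0 := by
    rw [tracelessPart_sq, ← map_zero (Matrix.scalar (Fin 2)), Ne, Matrix.scalar_inj]
    exact div_ne_zero hA four_ne_zero_of_two_ne_zero
  obtain h | h := eq_or_eq_neg_of_commute_of_sq_eq (trace_tracelessPart A) (trace_tracelessPart B)
    (commute_tracelessPart_left_iff.2 (commute_tracelessPart_right_iff.2 hg)) hsq hA_sq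
  · exact .inl (h ▸ hsemi)
  · exact .inr (h ▸ hsemi)

end TracelessPart

section PowersOfMatrices

variable {n F : Type*} [Fintype n] [DecidableEq n] [Field F]

theorem eq_zero_of_smul_add_scalar_mem_range_scalar {A : Matrix n n F} {c d : F}
    (hA : A ∉ Set.range (Matrix.scalar n))
    (h : c • A + Matrix.scalar n d ∈ Set.range (Matrix.scalar n)) : c = 0 := by
  by_contra hc
  obtain ⟨b, hb⟩ := h
  refine hA ⟨c⁻¹ * (b - d), ?_⟩
  rw [map_mul, map_sub, hb, add_sub_cancel_right, Matrix.scalar_apply,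
    ← Matrix.smul_eq_diagonal_mul, smul_smul, inv_mul_cancel₀ hc, one_smul]

variable {A : Matrix (Fin 2) (Fin 2) F}

theorem sq_eq_trace_smul_add_scalar (A : Matrix (Fin 2) (Fin 2) F) :
    A ^ 2 = A.trace • A + Matrix.scalar (Fin 2) (-A.det) := by
  rw [sq]
  ext i j
  fin_cases i <;> fin_cases j <;>
    simp [Matrix.mul_apply, Fin.sum_univ_two, Matrix.trace_fin_two, Matrix.det_fin_two] <;> ring

theorem pow_three_eq_smul_add_scalar (A : Matrix (Fin 2) (Fin 2) F) :
    A ^ 3 = (A.trace ^ 2 - A.det) • A + Matrix.scalar (Fin 2) (-(A.trace * A.det)) := by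
  have hscalar (c : F) : Matrix.scalar (Fin 2) c = c • 1 := by
    rw [Matrix.smul_one_eq_diagonal, Matrix.scalar_apply]
  rw [pow_succ, sq_eq_trace_smul_add_scalar, add_mul, smul_mul_assoc, ← sq,
    sq_eq_trace_smul_add_scalar]
  simp only [hscalar, smul_mul_assoc, one_mul]
  module

theorem trace_eq_zero_of_sq_mem_range_scalar (hA : A ∉ Set.range (Matrix.scalar (Fin 2)))
    (h : A ^ 2 ∈ Set.range (Matrix.scalar (Fin 2))) : A.trace = 0 :=
  eq_zero_of_smul_add_scalar_mem_range_scalar hA (sq_eq_trace_smul_add_scalar A ▸ h)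

theorem trace_sq_eq_det_of_pow_three_mem_range_scalar
    (hA : A ∉ Set.range (Matrix.scalar (Fin 2)))
    (h : A ^ 3 ∈ Set.range (Matrix.scalar (Fin 2))) : A.trace ^ 2 = A.det :=
  sub_eq_zero.1 <|
    eq_zero_of_smul_add_scalar_mem_range_scalar hA (pow_three_eq_smul_add_scalar A ▸ h)

theorem trace_sq_eq_two_mul_det_of_pow_four_mem_range_scalar
    (hA : A ^ 2 ∉ Set.range (Matrix.scalar (Fin 2)))
    (h : A ^ 4 ∈ Set.range (Matrix.scalar (Fin 2))) : A.trace ^ 2 = 2 * A.det := by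
  have htr : (A ^ 2).trace = 0 := trace_eq_zero_of_sq_mem_range_scalar hA (by rwa [← pow_mul])
  rw [sq_eq_trace_smul_add_scalar, Matrix.trace_add, Matrix.trace_smul, smul_eq_mul,
    Matrix.scalar_apply, Matrix.trace_diagonal, Fin.sum_univ_two] at htr
  linear_combination htr

end PowersOfMatrices

section NonsplitCartan

variable {F : Type*} [Field F] {δ : F} {g : GL (Fin 2) F} {A : Matrix (Fin 2) (Fin 2) F}

/-- The normalizer of the nonsplit Cartan subgroup of matrices `!![a, δ * b; b, a]`, described as
the matrices that commute or anticommute with the trace-zero generator `!![0, δ; 1, 0]`. -/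
def nonsplitCartanNormalizer (δ : F) : Subgroup (GL (Fin 2) F) :=
  centralizerUpToSign !![0, δ; 1, 0]

theorem mem_nonsplitCartanNormalizer_iff :
    g ∈ nonsplitCartanNormalizer δ ↔
      (g 1 1 = g 0 0 ∧ g 0 1 = δ * g 1 0) ∨ (g 1 1 = -g 0 0 ∧ g 0 1 = -(δ * g 1 0)) := by
  rw [nonsplitCartanNormalizer, mem_centralizerUpToSign_iff]
  simp only [SemiconjBy, ← Matrix.ext_iff, Fin.forall_fin_two, Matrix.mul_apply, Fin.sum_univ_two,
    Matrix.neg_apply, Matrix.of_apply, Matrix.cons_val_zero, Matrix.cons_val_one]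
  grind

theorem center_le_nonsplitCartanNormalizer (δ : F) :
    Subgroup.center (GL (Fin 2) F) ≤ nonsplitCartanNormalizer δ := by
  intro g hg
  obtain ⟨c, hc⟩ := Matrix.GeneralLinearGroup.mem_center_iff_val_mem_range_scalar.1 hg
  exact .inl (hc ▸ Matrix.scalar_commute c (Commute.all c) _)

theorem exists_semiconjBy_of_sq_eq_scalar (hδ : ¬IsSquare δ)
    (hA : A ^ 2 = Matrix.scalar (Fin 2) δ) :
    ∃ P : GL (Fin 2) F, SemiconjBy P.val A !![0, δ; 1, 0] := by
  have hentry (i j : Fin 2) := congr_fun₂ ((sq A).symm.trans hA) i j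
  simp only [Matrix.mul_apply, Fin.sum_univ_two, Matrix.scalar_apply] at hentry
  have h00 : A 0 0 * A 0 0 + A 0 1 * A 1 0 = δ := hentry 0 0
  have h10 : A 1 0 * A 0 0 + A 1 1 * A 1 0 = 0 := hentry 1 0
  have hA10 : A 1 0 ≠ 0 := fun h ↦ hδ ⟨A 0 0, by rw [← h00, h, mul_zero, add_zero]⟩
  -- the columns are `e₁` and `A e₁`
  let Q : GL (Fin 2) F := .mkOfDetNeZero !![1, A 0 0; 0, A 1 0] (by simpa using hA10)
  have hQ : SemiconjBy Q.val !![0, δ; 1, 0] A := by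
    ext i j
    fin_cases i <;> fin_cases j <;>
      simp [Q, Matrix.GeneralLinearGroup.mkOfDetNeZero, Matrix.mul_apply, Fin.sum_univ_two] <;>
      grind
  exact ⟨Q⁻¹, hQ.units_inv_symm_left⟩

theorem isSquare_mul_of_not_isSquare [Finite F] {a b : F} (ha : ¬IsSquare a) (hb : ¬IsSquare b) :
    IsSquare (a * b) := by
  classical
  have := Fintype.ofFinite F
  have ha0 : a ≠ 0 := fun h ↦ ha (h ▸ IsSquare.zero)
  have hb0 : b ≠ 0 := fun h ↦ hb (h ▸ IsSquare.zero)
  rw [← quadraticChar_neg_one_iff_not_isSquare] at ha hb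
  rw [← quadraticChar_one_iff_isSquare (mul_ne_zero ha0 hb0), map_mul, ha, hb, neg_mul_neg, one_mul]

variable [NeZero (2 : F)]

theorem trace_eq_zero_or_not_isSquare_discr_of_mem (hδ : ¬IsSquare δ)
    (hg : g ∈ nonsplitCartanNormalizer δ) (hcenter : g ∉ Subgroup.center (GL (Fin 2) F)) :
    g.val.trace = 0 ∨ ¬IsSquare g.val.discr := by
  obtain ⟨hdiag, hoff⟩ | ⟨hdiag, -⟩ := mem_nonsplitCartanNormalizer_iff.1 hg
  · have hdiscr : g.val.discr = δ * (2 * g 1 0) ^ 2 := by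
      rw [Matrix.discr_fin_two, Matrix.trace_fin_two, Matrix.det_fin_two, hdiag, hoff]
      ring
    have hg10 : g 1 0 ≠ 0 := fun h ↦ hcenter <|
      Matrix.GeneralLinearGroup.mem_center_iff_val_mem_range_scalar.2 <|
        mem_range_scalar_fin_two_iff.2 ⟨by rw [hoff, h, mul_zero], h, hdiag.symm⟩
    refine .inr fun hsq ↦ hδ ?_
    rw [← mul_div_cancel_right₀ δ (pow_ne_zero 2 (mul_ne_zero two_ne_zero hg10)), ← hdiscr]
    exact hsq.div (IsSquare.sq _)
  · exact .inl (by rw [Matrix.trace_fin_two, hdiag, add_neg_cancel])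

theorem trace_eq_zero_or_not_isSquare_discr_of_conj_mem (hδ : ¬IsSquare δ) {x : GL (Fin 2) F}
    (hg : x * g * x⁻¹ ∈ nonsplitCartanNormalizer δ)
    (hcenter : g ∉ Subgroup.center (GL (Fin 2) F)) :
    g.val.trace = 0 ∨ ¬IsSquare g.val.discr := by
  have hconj : x * g * x⁻¹ ∉ Subgroup.center (GL (Fin 2) F) := by
    rwa [conj_mem_iff_of_normal inferInstance]
  have hval : (x * g * x⁻¹).val = x.val * g.val * x.val⁻¹ := by simp
  rw [← Matrix.discr_conj x, ← Matrix.trace_units_conj x, Matrix.coe_units_inv, ← hval]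
  exact trace_eq_zero_or_not_isSquare_discr_of_mem hδ hg hconj

theorem discr_ne_zero_of_trace_eq_zero_or_not_isSquare
    (hg : g.val.trace = 0 ∨ ¬IsSquare g.val.discr) : g.val.discr ≠ 0 := by
  rintro hdiscr
  obtain htr | hsq := hg
  · rw [discr_fin_two_of_trace_eq_zero htr] at hdiscr
    exact mul_ne_zero (neg_ne_zero.2 four_ne_zero_of_two_ne_zero) g.det_ne_zero hdiscr
  · exact hsq (hdiscr ▸ IsSquare.zero)

theorem exists_forall_conj_mem_nonsplitCartanNormalizer [Finite F] (hδ : ¬IsSquare δ)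
    (hA : ¬IsSquare A.discr) {G : Subgroup (GL (Fin 2) F)}
    (hG : ∀ g ∈ G, Commute A (g.val * A * g.val⁻¹)) :
    ∃ x : GL (Fin 2) F, ∀ g ∈ G, x * g * x⁻¹ ∈ nonsplitCartanNormalizer δ := by
  have hdiscr : A.discr ≠ 0 := fun h ↦ hA (h ▸ IsSquare.zero)
  have hδ0 : δ ≠ 0 := fun h ↦ hδ (h ▸ IsSquare.zero)
  obtain ⟨s, hs⟩ := isSquare_mul_of_not_isSquare hA hδ
  have hs0 : s ≠ 0 := left_ne_zero_of_mul (hs ▸ mul_ne_zero hdiscr hδ0)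
  set c := 2 * δ / s with hc
  have hc0 : c ≠ 0 := div_ne_zero (mul_ne_zero two_ne_zero hδ0) hs0
  have hsq : (c • tracelessPart A) ^ 2 = Matrix.scalar (Fin 2) δ := by
    have hcoeff : c ^ 2 * (A.discr / 4) = δ := by
      have h4 : (4 : F) ≠ 0 := four_ne_zero_of_two_ne_zero
      rw [hc]
      field_simp
      linear_combination 4 * hs
    rw [smul_pow, tracelessPart_sq, Matrix.scalar_apply, Matrix.smul_eq_diagonal_mul,
      Matrix.diagonal_mul_diagonal, hcoeff, Matrix.scalar_apply]
  obtain ⟨x, hx⟩ := exists_semiconjBy_of_sq_eq_scalar hδ hsq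
  refine ⟨x, fun g hg ↦ ?_⟩
  rw [nonsplitCartanNormalizer, conj_mem_centralizerUpToSign_iff x hx,
    centralizerUpToSign_smul hc0]
  exact mem_centralizerUpToSign_tracelessPart hdiscr (hG g hg)

end NonsplitCartan

section LocallyNonsplit

open Subgroup

variable {F : Type*} [Field F] {G : Subgroup (GL (Fin 2) F)} {δ : F} {g x y : G}

/-- The scalar matrices in `G`. -/
abbrev scalars (G : Subgroup (GL (Fin 2) F)) : Subgroup G :=
  (center (GL (Fin 2) F)).subgroupOf G

/-- The elements of `G` whose determinant is a square in `F`. -/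
def squareDet (G : Subgroup (GL (Fin 2) F)) : Subgroup G where
  carrier := {g | IsSquare g.val.val.det}
  one_mem' := by simp
  mul_mem' {g h} hg hh := by simpa using IsSquare.mul hg hh
  inv_mem' {g} hg := by simpa using IsSquare.inv hg

theorem mem_squareDet_iff : g ∈ squareDet G ↔ IsSquare g.val.val.det :=
  Iff.rfl

theorem mem_scalars_iff : g ∈ scalars G ↔ g.val.val ∈ Set.range (Matrix.scalar (Fin 2)) := by
  rw [mem_subgroupOf, Matrix.GeneralLinearGroup.mem_center_iff_val_mem_range_scalar]

theorem commute_iff_commute_val_val : Commute x y ↔ Commute x.val.val y.val.val := by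
  simp [Commute, SemiconjBy, Subtype.ext_iff, Units.ext_iff]

theorem scalars_le_squareDet : scalars G ≤ squareDet G := by
  intro g hg
  obtain ⟨c, hc⟩ := mem_scalars_iff.1 hg
  exact ⟨c, by rw [← hc]; simp [sq]⟩

theorem notMem_scalars_of_not_isSquare_discr (hg : ¬IsSquare g.val.val.discr) : g ∉ scalars G := by
  intro hgZ
  obtain ⟨c, hc⟩ := mem_scalars_iff.1 hgZ
  refine hg ⟨0, ?_⟩
  rw [← hc, Matrix.discr_fin_two, Matrix.trace_fin_two, Matrix.det_fin_two]
  simp only [Matrix.scalar_apply, Matrix.diagonal_apply_eq, Matrix.diagonal_apply_ne _ zero_ne_one,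
    Matrix.diagonal_apply_ne _ one_ne_zero]
  ring

theorem index_squareDet_eq_two [Finite F] (hg : g ∉ squareDet G) :
    (squareDet G).index = 2 := by
  refine (index_eq_one_or_two_of_mul_mem fun a ha b hb ↦ ?_).resolve_left fun h ↦ ?_
  · rw [mem_squareDet_iff] at ha hb ⊢
    simpa using isSquare_mul_of_not_isSquare ha hb
  · exact hg (index_eq_one.1 h ▸ mem_top g : g ∈ squareDet G)

theorem trace_eq_zero_of_sq_mem_scalars (hx : x ∉ scalars G) (hx2 : x ^ 2 ∈ scalars G) :
    x.val.val.trace = 0 := by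
  rw [mem_scalars_iff] at hx hx2
  exact trace_eq_zero_of_sq_mem_range_scalar hx (by simpa using hx2)

section NeZeroTwo

variable [NeZero (2 : F)]

theorem mul_mem_scalars_of_commute (hx : x.val.val.trace = 0) (hy : y.val.val.trace = 0)
    (hxy : Commute x y) : x * y ∈ scalars G :=
  mem_scalars_iff.2 <| by
    simpa using mul_mem_range_scalar_of_commute hx hy (commute_iff_commute_val_val.1 hxy)

theorem hasToralCentralizers_scalars (hG : ∀ g ∉ scalars G, g.val.val.discr ≠ 0) :
    HasToralCentralizers (scalars G) where
  le_center g hg := mem_center_iff.2 fun h ↦ Subtype.ext (mem_center_iff.1 hg h)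
  commute_of_commute hx hxy hxz := by
    rw [commute_iff_commute_val_val] at hxy hxz ⊢
    exact commute_of_commute_of_notMem_range_scalar (mem_scalars_iff.not.1 hx) hxy hxz
  mul_mem_centralizer {x a b} hx ha hax hb hbx := by
    have hmem {k : G} (hk : k ∈ normalizer (centralizer {x} : Set G)) :
        k.val ∈ centralizerUpToSign (tracelessPart x.val.val) := by
      have hkx := (mem_normalizer_iff.1 hk x).1 (mem_centralizer_singleton_iff_commute.2 (.refl x))
      rw [mem_centralizer_singleton_iff_commute, commute_iff_commute_val_val] at hkx
      exact mem_centralizerUpToSign_tracelessPart (hG x hx) (by simpa using hkx)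
    have hnotcomm {k : G} (hk : k ∉ centralizer {x}) :
        ¬Commute k.val.val (tracelessPart x.val.val) := by
      rwa [commute_tracelessPart_right_iff, Commute.symm_iff, ← commute_iff_commute_val_val,
        ← mem_centralizer_singleton_iff_commute]
    rw [mem_centralizer_singleton_iff_commute, commute_iff_commute_val_val,
      ← commute_tracelessPart_left_iff]
    simpa using (commute_mul_of_mem_centralizerUpToSign (hmem ha) (hmem hb) (hnotcomm hax)
      (hnotcomm hbx)).symm

theorem exists_forall_conj_mem_of_index_centralizer_le_two [Finite F] (hδ : ¬IsSquare δ)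
    (hg : ¬IsSquare g.val.val.discr) (hindex : (centralizer {g}).index ≤ 2) :
    ∃ x : GL (Fin 2) F, ∀ g ∈ G, x * g * x⁻¹ ∈ nonsplitCartanNormalizer δ := by
  have hnormal : (centralizer {g}).Normal := by
    have hpos : (centralizer {g}).index ≠ 0 := index_ne_zero_of_finite
    obtain h | h : (centralizer {g}).index = 1 ∨ (centralizer {g}).index = 2 := by lia
    · exact index_eq_one.1 h ▸ normal_of_characteristic ⊤
    · exact normal_of_index_eq_two h
  refine exists_forall_conj_mem_nonsplitCartanNormalizer hδ hg fun k hk ↦ ?_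
  have hcomm := hnormal.conj_mem g (mem_centralizer_singleton_iff_commute.2 (.refl g)) ⟨k, hk⟩
  simpa using commute_iff_commute_val_val.1 (mem_centralizer_singleton_iff_commute.1 hcomm)

theorem isSquare_neg_det_of_trace_eq_zero {A : Matrix (Fin 2) (Fin 2) F} (htr : A.trace = 0)
    (hsq : IsSquare A.discr) : IsSquare (-A.det) := by
  have hdiscr : A.discr / 2 ^ 2 = -A.det := by
    have h4 : (2 : F) ^ 2 ≠ 0 := pow_ne_zero 2 two_ne_zero
    rw [discr_fin_two_of_trace_eq_zero htr, div_eq_iff h4]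
    ring
  exact hdiscr ▸ hsq.div (IsSquare.sq 2)

theorem mul_mem_scalars_of_forall_trace_eq_zero
    (hG : ∀ g ∉ scalars G, g.val.val.trace = 0 ∧ IsSquare g.val.val.discr)
    (hg : g ∉ squareDet G) (hx : x ∉ scalars G) : x * g ∈ scalars G := by
  have hneg {y : G} (hy : y ∉ scalars G) : IsSquare (-y.val.val.det) :=
    isSquare_neg_det_of_trace_eq_zero (hG y hy).1 (hG y hy).2
  by_contra hxg
  have hdet : IsSquare (-(x.val.val.det * g.val.val.det) / -x.val.val.det) := by
    simpa using (hneg hxg).div (hneg hx)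
  rw [neg_div_neg_eq, mul_div_cancel_left₀ _ x.val.det_ne_zero] at hdet
  exact hg hdet

theorem exists_forall_conj_mem_of_forall_trace_eq_zero
    (hG : ∀ g ∉ scalars G, g.val.val.trace = 0 ∧ IsSquare g.val.val.discr)
    (hg : g ∉ squareDet G) (hloc : ∃ x, x * g.val * x⁻¹ ∈ nonsplitCartanNormalizer δ) :
    ∃ x : GL (Fin 2) F, ∀ g ∈ G, x * g * x⁻¹ ∈ nonsplitCartanNormalizer δ := by
  obtain ⟨x, hx⟩ := hloc
  have hscalar {k : GL (Fin 2) F} (hk : k ∈ center (GL (Fin 2) F)) :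
      x * k * x⁻¹ ∈ nonsplitCartanNormalizer δ :=
    center_le_nonsplitCartanNormalizer δ (Subgroup.Normal.conj_mem inferInstance k hk x)
  refine ⟨x, fun k hk ↦ ?_⟩
  by_cases hkZ : ⟨k, hk⟩ ∈ scalars G
  · exact hscalar hkZ
  · have hkg := hscalar (mul_mem_scalars_of_forall_trace_eq_zero hG hg hkZ)
    rw [← Subgroup.mul_mem_cancel_right _ hx]
    simpa [mul_assoc] using hkg

theorem relIndex_scalars_centralizer_le_two (hx : x ∉ scalars G)
    (htr : ∀ y ∉ scalars G, Commute x y → y.val.val.trace = 0)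
    (hZ : HasToralCentralizers (scalars G)) : (scalars G).relIndex (centralizer {x}) ≤ 2 := by
  have := relIndex_eq_one_or_two_of_mul_mem (H := scalars G) (K := centralizer {x})
    fun a ha haZ b hb hbZ ↦ ?_
  · lia
  · rw [mem_centralizer_singleton_iff_commute] at ha hb
    exact mul_mem_scalars_of_commute (htr a haZ ha) (htr b hbZ hb) (hZ.commute_of_commute hx ha hb)

theorem exists_not_isSquare_discr_and_index_centralizer_le_two [Finite F]
    (hG : ∀ g ∉ scalars G, g.val.val.trace = 0 ∨ ¬IsSquare g.val.val.discr)
    (hx : x ∉ scalars G) (hindex : (centralizer {x}).index ≤ 2)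
    (hg : ¬IsSquare g.val.val.discr) :
    ∃ y : G, ¬IsSquare y.val.val.discr ∧ (centralizer {y}).index ≤ 2 := by
  have hZ : HasToralCentralizers (scalars G) :=
    hasToralCentralizers_scalars fun g hg ↦ discr_ne_zero_of_trace_eq_zero_or_not_isSquare (hG g hg)
  by_cases! hy : ∃ y, Commute x y ∧ ¬IsSquare y.val.val.discr
  · obtain ⟨y, hxy, hy⟩ := hy
    exact ⟨y, hy, hZ.centralizer_eq hx (notMem_scalars_of_not_isSquare_discr hy) hxy ▸ hindex⟩
  · refine ⟨g, hg, ?_⟩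
    have hZx : (scalars G).relIndex (centralizer {x}) ≤ 2 :=
      relIndex_scalars_centralizer_le_two hx
        (fun y hyZ hxy ↦ (hG y hyZ).resolve_right (not_not_intro (hy y hxy))) hZ
    have hZg : 2 ≤ (scalars G).relIndex (centralizer {g}) :=
      two_le_relIndex_of_not_le fun h ↦ notMem_scalars_of_not_isSquare_discr hg <|
        h (mem_centralizer_singleton_iff_commute.2 (.refl g))
    have hmul := relIndex_mul_index (hZ.le_centralizer {x})
    rw [← relIndex_mul_index (hZ.le_centralizer {g})] at hmul
    nlinarith

end NeZeroTwo

end LocallyNonsplit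

section Octahedral

open Subgroup

variable {F : Type*} [Field F] {G : Subgroup (GL (Fin 2) F)} {g d : G}

theorem isSquare_neg_three_of_card_mod_three_ne_two [Finite F] (h : Nat.card F % 3 ≠ 2) :
    IsSquare (-3 : F) := by
  have hcases : 3 ∣ Nat.card F ∨ 3 ∣ Nat.card Fˣ := by
    have := Nat.card_pos (α := F)
    rw [Nat.card_units]
    lia
  obtain h | h := hcases
  · obtain ⟨a, ha⟩ := exists_prime_addOrderOf_dvd_card' 3 h
    have ha0 : a ≠ 0 := by
      rintro rfl
      simp at ha
    have h3a : (3 : F) * a = 0 := by simpa [ha] using addOrderOf_nsmul_eq_zero a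
    exact ⟨0, by simpa [ha0] using h3a⟩
  · obtain ⟨w, hw⟩ := exists_prime_orderOf_dvd_card' 3 h
    have hw3 : (w : F) ^ 3 = 1 := by
      rw [← Units.val_pow_eq_pow_val, ← hw, pow_orderOf_eq_one, Units.val_one]
    have hw1 : (w : F) ≠ 1 := by
      rw [Ne, Units.val_eq_one, ← orderOf_eq_one_iff, hw]
      decide
    have hroot : (w : F) ^ 2 + w + 1 = 0 :=
      mul_left_cancel₀ (sub_ne_zero.2 hw1) (by linear_combination hw3)
    exact ⟨2 * w + 1, by linear_combination -4 * hroot⟩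

theorem card_mod_twenty_four_eq_eleven [Finite F] (hneg_one : ¬IsSquare (-1 : F))
    (htwo : ¬IsSquare (2 : F)) (hneg_three : ¬IsSquare (-3 : F)) : Nat.card F % 24 = 11 := by
  have := Fintype.ofFinite F
  rw [FiniteField.isSquare_neg_one_iff] at hneg_one
  rw [FiniteField.isSquare_two_iff] at htwo
  have hthree := mt isSquare_neg_three_of_card_mod_three_ne_two hneg_three
  rw [Nat.card_eq_fintype_card] at hthree ⊢
  lia

theorem not_isSquare_neg_three
    (hG : ∀ g ∉ scalars G, g.val.val.trace = 0 ∨ ¬IsSquare g.val.val.discr)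
    (hd : d ∉ scalars G) (hd3 : d ^ 3 ∈ scalars G) : ¬IsSquare (-3 : F) := by
  have htrdet : d.val.val.trace ^ 2 = d.val.val.det := by
    rw [mem_scalars_iff] at hd hd3
    exact trace_sq_eq_det_of_pow_three_mem_range_scalar hd (by simpa using hd3)
  have htr : d.val.val.trace ≠ 0 := fun h ↦
    d.val.det_ne_zero (by rw [← htrdet, h, zero_pow two_ne_zero])
  have hdiscr : d.val.val.discr = -3 * d.val.val.trace ^ 2 := by
    rw [Matrix.discr_fin_two]
    linear_combination 4 * htrdet
  intro h
  exact (hG d hd).resolve_left htr (hdiscr ▸ h.mul (IsSquare.sq _))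

variable [NeZero (2 : F)]

theorem trace_ne_zero_of_sq_notMem_scalars (hg : g ^ 2 ∉ scalars G) : g.val.val.trace ≠ 0 :=
  fun h ↦ hg (sq g ▸ mul_mem_scalars_of_commute h h (.refl g))

theorem not_isSquare_neg_one_and_two
    (hG : ∀ g ∉ scalars G, g.val.val.trace = 0 ∨ ¬IsSquare g.val.val.discr)
    (hg : g ∉ squareDet G) (hg2 : g ^ 2 ∉ scalars G) (hg4 : g ^ 4 ∈ scalars G) :
    ¬IsSquare (-1 : F) ∧ ¬IsSquare (2 : F) := by
  have htr := trace_ne_zero_of_sq_notMem_scalars hg2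
  have htrdet : g.val.val.trace ^ 2 = 2 * g.val.val.det := by
    rw [mem_scalars_iff] at hg2 hg4
    exact trace_sq_eq_two_mul_det_of_pow_four_mem_range_scalar (by simpa using hg2)
      (by simpa using hg4)
  have hdiscr : g.val.val.discr = -1 * g.val.val.trace ^ 2 := by
    rw [Matrix.discr_fin_two]
    linear_combination 2 * htrdet
  constructor
  · intro h
    refine (hG g fun h ↦ hg2 (pow_mem h 2)).resolve_left htr ?_
    exact hdiscr ▸ h.mul (IsSquare.sq _)
  · intro h
    refine hg (mem_squareDet_iff.2 ?_)
    rw [← mul_div_cancel_left₀ g.val.val.det (two_ne_zero (α := F)), ← htrdet]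
    exact (IsSquare.sq _).div h

end Octahedral

section LocalGlobal

open Subgroup

variable {F : Type*} [Field F] [Finite F] [NeZero (2 : F)] {G : Subgroup (GL (Fin 2) F)} {δ : F}
  {g₀ x : G}

theorem exists_forall_conj_mem_of_notMem_squareDet (hδ : ¬IsSquare δ)
    (hloc : ∀ g ∈ G, ∃ x : GL (Fin 2) F, x * g * x⁻¹ ∈ nonsplitCartanNormalizer δ)
    (hG : ∀ g ∉ scalars G, g.val.val.trace = 0 ∨ ¬IsSquare g.val.val.discr)
    (hg₀ : g₀ ∉ squareDet G) (hx : x ∉ scalars G) (hindex : (centralizer {x}).index ≤ 2) :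
    ∃ x : GL (Fin 2) F, ∀ g ∈ G, x * g * x⁻¹ ∈ nonsplitCartanNormalizer δ := by
  by_cases! hsq : ∃ g : G, ¬IsSquare g.val.val.discr
  · obtain ⟨g, hg⟩ := hsq
    obtain ⟨y, hy, hy_index⟩ :=
      exists_not_isSquare_discr_and_index_centralizer_le_two hG hx hindex hg
    exact exists_forall_conj_mem_of_index_centralizer_le_two hδ hy hy_index
  · refine exists_forall_conj_mem_of_forall_trace_eq_zero (fun g hg ↦ ⟨?_, hsq g⟩) hg₀
      (hloc g₀ g₀.2)
    exact (hG g hg).resolve_right (not_not_intro (hsq g))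

theorem nonempty_mulEquiv_perm_and_card_mod_eq {b d : G}
    (hG : ∀ g ∉ scalars G, g.val.val.trace = 0 ∨ ¬IsSquare g.val.val.discr)
    (hZ : HasToralCentralizers (scalars G)) (hindex : (scalars G).index = 24)
    (hb : b ∉ squareDet G) (hb_card : (scalars G).relIndex (centralizer {b}) = 4)
    (hd : d ∉ scalars G) (hd_card : (scalars G).relIndex (centralizer {d}) = 3)
    (hd_index : (normalizer (centralizer {d} : Set G)).index = 4) :
    Nonempty (G.map (QuotientGroup.mk' (center (GL (Fin 2) F))) ≃* Equiv.Perm (Fin 4)) ∧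
      Nat.card F % 24 = 11 := by
  obtain ⟨φ, hφ, hker⟩ := hZ.exists_surjective_perm_ker_eq hindex hd hd_card hd_index
  refine ⟨nonempty_map_mk_mulEquiv_of_ker_eq hφ hker, ?_⟩
  have hsq {x y : G} (hx : x ∉ scalars G) (hy : y ∉ scalars G) (hxy : Commute x y)
      (hx2 : x ^ 2 ∈ scalars G) (hy2 : y ^ 2 ∈ scalars G) : x * y ∈ scalars G :=
    mul_mem_scalars_of_commute (trace_eq_zero_of_sq_mem_scalars hx hx2)
      (trace_eq_zero_of_sq_mem_scalars hy hy2) hxy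
  obtain ⟨g, hg, hg2, hg4⟩ := hZ.exists_pow_four_mem (index_squareDet_eq_two hb) hsq
    scalars_le_squareDet hb hb_card
  have hZn := hZ.normal
  have hd3 : d ^ 3 ∈ scalars G :=
    hd_card ▸ pow_relIndex_mem (mem_centralizer_singleton_iff_commute.2 (.refl d))
  obtain ⟨hneg_one, htwo⟩ := not_isSquare_neg_one_and_two hG hg hg2 hg4
  exact card_mod_twenty_four_eq_eleven hneg_one htwo (not_isSquare_neg_three hG hd hd3)

end LocalGlobal

theorem local_global_normalizer_nonsplit_cartan_surjective_det_general {F : Type*} [Field F]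
    [Finite F] {δ : F} (hδ : ¬IsSquare δ) (G : Subgroup (GL (Fin 2) F))
    (hloc : ∀ g ∈ G, ∃ x : GL (Fin 2) F, x * g * x⁻¹ ∈ nonsplitCartanNormalizer δ)
    (hdet : ∃ g ∈ G, ¬IsSquare g.val.det) :
    (∃ x : GL (Fin 2) F, ∀ g ∈ G, x * g * x⁻¹ ∈ nonsplitCartanNormalizer δ) ∨
    (Nonempty (G.map (QuotientGroup.mk' (Subgroup.center (GL (Fin 2) F))) ≃* Equiv.Perm (Fin 4)) ∧
      Nat.card F % 24 = 11) := by
  have : NeZero (2 : F) :=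
    ⟨Ring.two_ne_zero fun h ↦ hδ (FiniteField.isSquare_of_char_two h δ)⟩
  obtain ⟨g₀, hg₀, hdet₀⟩ := hdet
  have hK : (squareDet G).index = 2 := index_squareDet_eq_two (g := ⟨g₀, hg₀⟩) hdet₀
  have hG : ∀ g ∉ scalars G, g.val.val.trace = 0 ∨ ¬IsSquare g.val.val.discr := fun g hg ↦ by
    obtain ⟨x, hx⟩ := hloc g g.2
    exact trace_eq_zero_or_not_isSquare_discr_of_conj_mem hδ hx hg
  have hZ : HasToralCentralizers (scalars G) :=
    hasToralCentralizers_scalars fun g hg ↦ discr_ne_zero_of_trace_eq_zero_or_not_isSquare (hG g hg)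
  obtain ⟨x, hx, hindex⟩ | ⟨hindex, ⟨b, hb, hb_card⟩, d, hd, hd_card, hd_index⟩ :=
    hZ.exists_index_centralizer_le_two_or hK scalars_le_squareDet
  · exact .inl (exists_forall_conj_mem_of_notMem_squareDet (g₀ := ⟨g₀, hg₀⟩) hδ hloc hG hdet₀ hx
      hindex)
  · exact .inr (nonempty_mulEquiv_perm_and_card_mod_eq hG hZ hindex hb hb_card hd hd_card hd_index)

theorem inNns_iff_mem_nonsplitCartanNormalizer {ℓ : ℕ} [Fact ℓ.Prime] {δ : ZMod ℓ} {g : GL2 ℓ} :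
    InNns δ g ↔ g ∈ nonsplitCartanNormalizer δ :=
  mem_nonsplitCartanNormalizer_iff.symm

/-- If every element of `G ≤ GL₂(F_ℓ)` lies in a conjugate of `N_ns`, some
element lies in no conjugate of `C_ns`, and the determinant map `G → F_ℓˣ` is surjective,
then `G` is in a conjugate of `N_ns`, or its projective image is `S₄` and
`ℓ ≡ 11 (mod 24)`. -/
theorem local_global_normalizer_nonsplit_cartan_surjective_det
    {ℓ : ℕ} [Fact ℓ.Prime] (hℓ : ℓ ≠ 2) (δ : ZMod ℓ) (hδ : ¬ IsSquare δ)
    (G : Subgroup (GL2 ℓ))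
    (hloc : ∀ g ∈ G, ∃ x : GL2 ℓ, InNns δ (x * g * x⁻¹))
    (hnc : ∃ g ∈ G, ¬ ∃ x : GL2 ℓ, InCns δ (x * g * x⁻¹))
    (hdet : ∀ u : (ZMod ℓ)ˣ, ∃ g ∈ G, Matrix.GeneralLinearGroup.det g = u) :
    (∃ x : GL2 ℓ, ∀ g ∈ G, InNns δ (x * g * x⁻¹)) ∨
    (IsS4 (projImage G) ∧ ℓ % 24 = 11) := by
  obtain ⟨g, hg, hgδ⟩ := hdet (Units.mk0 δ fun h ↦ hδ (h ▸ IsSquare.zero))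
  have hdet' : g.val.det = δ := congr_arg Units.val hgδ
  simp only [inNns_iff_mem_nonsplitCartanNormalizer] at hloc ⊢
  have hgeneral :=
    local_global_normalizer_nonsplit_cartan_surjective_det_general hδ G hloc ⟨g, hg, hdet' ▸ hδ⟩
  rwa [Nat.card_zmod] at hgeneral
end
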